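/- arXiv:2207.09552 — 7 statements merged into one kernel-verified Lean document; each statement's English description precedes it below -/
import Mathlib

section
/- Let K be a centrally symmetric convex body in ℝ² and suppose there exists a triangle T° with barycenter at the origin whose vertices lie on the boundary of the polar body K°, such that |K|·|T°| ≤ (3√3/4)π. Then d_{2,1}(K) ≤ √3·π/8. -/
open MeasureTheory Set Matrix Pointwise

noncomputable section

/-- The lattice `A · ℤⁿ` associated with an (invertible) matrix `A`. -/
def latticeOf {n : ℕ} (A : Matrix (Fin n) (Fin n) ℝ) : Set (Fin n → ℝ) :=
  Set.range fun m : Fin n → ℤ => A.mulVec fun i => (m i : ℝ)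

/-- `Λ + K` is non-separable: every affine hyperplane `{y | ⟨u,y⟩ = c}` (with `u ≠ 0`)
meets `x + K` for some `x ∈ Λ`. -/
def NonSeparable {n : ℕ} (Λ K : Set (Fin n → ℝ)) : Prop :=
  ∀ u : Fin n → ℝ, u ≠ 0 → ∀ c : ℝ, ∃ x ∈ Λ, ∃ y ∈ K, u ⬝ᵥ (x + y) = c

/-- `d_{n,n-1}(K)`: the smallest density `|K|/d(Λ)` of a non-separable
lattice of translates of `K`. -/
def dTrans {n : ℕ} (K : Set (Fin n → ℝ)) : ℝ :=
  sInf {d : ℝ | ∃ A : Matrix (Fin n) (Fin n) ℝ, A.det ≠ 0 ∧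
    NonSeparable (latticeOf A) K ∧ d = (volume K).toReal / |A.det|}

/-- The polar body `K° = {x | ∀ y ∈ K, ⟨y,x⟩ ≤ 1}`. -/
def polarBody {n : ℕ} (K : Set (Fin n → ℝ)) : Set (Fin n → ℝ) :=
  {x | ∀ y ∈ K, y ⬝ᵥ x ≤ 1}


/-- Support function of `K`. -/
def suppFn (K : Set (Fin 2 → ℝ)) (u : Fin 2 → ℝ) : ℝ :=
  sSup ((fun y => u ⬝ᵥ y) '' K)

theorem suppFn_cont (K : Set (Fin 2 → ℝ)) (hK : IsCompact K) : Continuous (suppFn K) := by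
  unfold suppFn
  apply IsCompact.continuous_sSup hK
  simp only [Function.HasUncurry.uncurry, dotProduct, id]
  fun_prop

theorem le_suppFn {K : Set (Fin 2 → ℝ)} (hK : IsCompact K) (u : Fin 2 → ℝ) {y : Fin 2 → ℝ}
    (hy : y ∈ K) : u ⬝ᵥ y ≤ suppFn K u := by
  apply le_csSup
  · apply (hK.image _).bddAbove
    simp only [dotProduct]; fun_prop
  · exact ⟨y, hy, rfl⟩

theorem exists_suppFn {K : Set (Fin 2 → ℝ)} (hK : IsCompact K) (hne : K.Nonempty)
    (u : Fin 2 → ℝ) : ∃ y ∈ K, u ⬝ᵥ y = suppFn K u := by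
  have : Continuous (fun y => u ⬝ᵥ y) := by simp only [dotProduct]; fun_prop
  obtain ⟨y, hy, h⟩ := (hK.image this).sSup_mem (hne.image _)
  exact ⟨y, hy, h⟩

theorem suppFn_add {K : Set (Fin 2 → ℝ)} (hK : IsCompact K) (hne : K.Nonempty)
    (u v : Fin 2 → ℝ) : suppFn K (u + v) ≤ suppFn K u + suppFn K v := by
  obtain ⟨y, hy, h⟩ := exists_suppFn hK hne (u + v)
  rw [← h, add_dotProduct]
  exact add_le_add (le_suppFn hK u hy) (le_suppFn hK v hy)

theorem suppFn_smul_le {K : Set (Fin 2 → ℝ)} (hK : IsCompact K) (hne : K.Nonempty)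
    (hs : ∀ y ∈ K, -y ∈ K) (c : ℝ) (u : Fin 2 → ℝ) :
    suppFn K (c • u) = |c| * suppFn K u := by
  apply le_antisymm
  · obtain ⟨y, hy, h⟩ := exists_suppFn hK hne (c • u)
    rw [← h, smul_dotProduct, smul_eq_mul]
    have h1 := le_suppFn hK u hy
    have h2 := le_suppFn hK u (hs y hy)
    rw [dotProduct_neg] at h2
    rcases abs_cases c with ⟨h, h'⟩ | ⟨h, h'⟩ <;> rw [h] <;> nlinarith
  · obtain ⟨y, hy, h⟩ := exists_suppFn hK hne u
    rw [← h]
    rcases abs_cases c with ⟨h, h'⟩ | ⟨h, h'⟩ <;> rw [h]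
    · have := le_suppFn hK (c • u) hy
      rwa [smul_dotProduct, smul_eq_mul] at this
    · have := le_suppFn hK (c • u) (hs y hy)
      rw [smul_dotProduct, smul_eq_mul, dotProduct_neg] at this
      linarith

theorem suppFn_pos {K : Set (Fin 2 → ℝ)} (hK : IsCompact K) (hi : (interior K).Nonempty)
    (hs : ∀ y ∈ K, -y ∈ K) {u : Fin 2 → ℝ} (hu : u ≠ 0) : 0 < suppFn K u := by
  obtain ⟨y, hy⟩ := hi
  have hc : Continuous (fun t : ℝ => y + t • u) := by fun_prop
  have hm : (fun t : ℝ => y + t • u) ⁻¹' (interior K) ∈ nhds (0 : ℝ) := by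
    apply (isOpen_interior.preimage hc).mem_nhds
    simpa using hy
  obtain ⟨ε, hε, hb⟩ := Metric.mem_nhds_iff.1 hm
  have h1 : ε / 2 ∈ Metric.ball (0 : ℝ) ε := by
    rw [Metric.mem_ball, Real.dist_eq, sub_zero, abs_of_pos (by positivity)]; linarith
  have h2 := le_suppFn hK u (interior_subset (hb h1))
  have h3 := le_suppFn hK u (hs y (interior_subset hy))
  rw [dotProduct_neg] at h3
  rw [dotProduct_add, dotProduct_smul, smul_eq_mul] at h2
  have h4 : 0 < u ⬝ᵥ u := by
    have h0 : 0 ≤ u ⬝ᵥ u := by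
      simp only [dotProduct]; exact Finset.sum_nonneg fun i _ => mul_self_nonneg _
    exact lt_of_le_of_ne h0 fun h => hu (dotProduct_self_eq_zero.1 h.symm)
  have : 0 < ε / 2 * (u ⬝ᵥ u) := by positivity
  linarith

theorem suppFn_attain {K : Set (Fin 2 → ℝ)} (hK : IsCompact K) (hconv : Convex ℝ K)
    (hi : (interior K).Nonempty) (hs : ∀ y ∈ K, -y ∈ K) {u : Fin 2 → ℝ} (hu : u ≠ 0)
    {t : ℝ} (ht : |t| ≤ suppFn K u) : ∃ y ∈ K, u ⬝ᵥ y = t := by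
  obtain ⟨y, hy, h⟩ := exists_suppFn hK (hi.mono interior_subset) u
  have hp := suppFn_pos hK hi hs hu
  have ht' := abs_le.1 ht
  set H := suppFn K u
  refine ⟨((1 + t / H) / 2) • y + ((1 - t / H) / 2) • (-y), ?_, ?_⟩
  · apply hconv hy (hs y hy)
    · have : -1 ≤ t / H := by rw [le_div_iff₀ hp]; linarith
      linarith
    · have : t / H ≤ 1 := by rw [div_le_iff₀ hp]; linarith
      linarith
    · ring
  · rw [dotProduct_add, dotProduct_smul, dotProduct_smul, dotProduct_neg, h]
    simp only [smul_eq_mul]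
    field_simp
    ring

theorem suppFn_frontier {K : Set (Fin 2 → ℝ)} (hK : IsCompact K) (hne : K.Nonempty)
    {p : Fin 2 → ℝ} (hp : p ∈ frontier (polarBody K)) : suppFn K p = 1 := by
  have : polarBody K = {x | suppFn K x ≤ 1} := by
    ext x
    constructor
    · intro hx
      obtain ⟨y, hy, h⟩ := exists_suppFn hK hne x
      have := hx y hy
      rw [dotProduct_comm, h] at this
      exact this
    · intro hx y hy
      rw [dotProduct_comm]
      exact (le_suppFn hK x hy).trans hx
  rw [this] at hp
  exact frontier_le_subset_eq (suppFn_cont K hK) continuous_const hp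

/-- The lattice spanned by `p, q` has no nonzero points of norm less than one. -/
theorem suppFn_lattice {K : Set (Fin 2 → ℝ)} (hK : IsCompact K) (hne : K.Nonempty)
    (hs : ∀ y ∈ K, -y ∈ K) {p q : Fin 2 → ℝ} (hp : suppFn K p = 1) (hq : suppFn K q = 1)
    (hpq : suppFn K (p + q) = 1) (m n : ℤ) (hmn : ¬ (m = 0 ∧ n = 0)) :
    1 ≤ suppFn K ((m : ℝ) • p + (n : ℝ) • q) := by
  set w := (m : ℝ) • p + (n : ℝ) • q with hw
  have key : ∀ (r s : Fin 2 → ℝ) (a b : ℤ), suppFn K r = 1 → suppFn K s = 1 →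
      (a : ℝ) • r = w + (b : ℝ) • s → ((|a| - |b| : ℤ) : ℝ) ≤ suppFn K w := by
    intro r s a b hr hs' h
    have h1 := suppFn_add hK hne w ((b : ℝ) • s)
    rw [← h, suppFn_smul_le hK hne hs, suppFn_smul_le hK hne hs, hr, hs'] at h1
    push_cast
    linarith
  have k1 := key p q m (-n) hp hq (by rw [hw]; push_cast; module)
  have k2 := key q p n (-m) hq hp (by rw [hw]; push_cast; module)
  have k3 := key p (p + q) (m - n) (-n) hp hpq (by rw [hw]; push_cast; module)
  have k4 := key q (p + q) (n - m) (-m) hq hpq (by rw [hw]; push_cast; module)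
  have k5 := key (p + q) p n (n - m) hpq hp (by rw [hw]; push_cast; module)
  have k6 := key (p + q) q m (m - n) hpq hq (by rw [hw]; push_cast; module)
  have hh : 1 ≤ |m| - |-n| ∨ 1 ≤ |n| - |-m| ∨ 1 ≤ |m - n| - |-n| ∨ 1 ≤ |n - m| - |-m| ∨
      1 ≤ |n| - |n - m| ∨ 1 ≤ |m| - |m - n| := by
    simp only [abs_eq_max_neg]
    omega
  rcases hh with h | h | h | h | h | h
  · exact le_trans (by exact_mod_cast h) k1
  · exact le_trans (by exact_mod_cast h) k2
  · exact le_trans (by exact_mod_cast h) k3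
  · exact le_trans (by exact_mod_cast h) k4
  · exact le_trans (by exact_mod_cast h) k5
  · exact le_trans (by exact_mod_cast h) k6

theorem nonSeparable_aux {K : Set (Fin 2 → ℝ)} (hK : IsCompact K) (hconv : Convex ℝ K)
    (hi : (interior K).Nonempty) (hs : ∀ y ∈ K, -y ∈ K) {p q : Fin 2 → ℝ}
    (hp : suppFn K p = 1) (hq : suppFn K q = 1) (hpq : suppFn K (p + q) = 1)
    (B : Matrix (Fin 2) (Fin 2) ℝ) (hB : B = !![p 0 / 2, p 1 / 2; q 0 / 2, q 1 / 2])
    (hdet : B.det ≠ 0) : NonSeparable (latticeOf B⁻¹) K := by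
  intro u hu c
  have hne := hi.mono interior_subset
  -- coordinates of `u` in the basis
  set s : Fin 2 → ℝ := u ᵥ* B⁻¹ with hsdef
  have hus : u = s ᵥ* B := by
    rw [hsdef, vecMul_vecMul, nonsing_inv_mul _ (isUnit_iff_ne_zero.2 hdet), vecMul_one]
  have hval : ∀ m : Fin 2 → ℤ, u ⬝ᵥ (B⁻¹ *ᵥ fun i => (m i : ℝ)) = s 0 * m 0 + s 1 * m 1 := by
    intro m
    rw [dotProduct_mulVec, ← hsdef]
    simp [dotProduct, Fin.sum_univ_two]
  have hub : u = (s 0 / 2) • p + (s 1 / 2) • q := by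
    rw [hus, hB]
    ext i
    fin_cases i <;> simp [vecMul, dotProduct, Fin.sum_univ_two] <;> ring
  have suff : (∃ m n : ℤ, |c - (s 0 * m + s 1 * n)| ≤ suppFn K u) →
      ∃ x ∈ latticeOf B⁻¹, ∃ y ∈ K, u ⬝ᵥ (x + y) = c := by
    rintro ⟨m, n, h⟩
    obtain ⟨y, hy, h'⟩ := suppFn_attain hK hconv hi hs hu h
    refine ⟨_, ⟨![m, n], rfl⟩, y, hy, ?_⟩
    rw [dotProduct_add, hval, h']
    simp
  apply suff
  have hmem : ∀ x ∈ AddSubgroup.closure ({s 0, s 1} : Set ℝ), ∃ m n : ℤ, x = s 0 * m + s 1 * n := by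
    intro x hx
    obtain ⟨m, n, h⟩ := AddSubgroup.mem_closure_pair.1 hx
    refine ⟨m, n, ?_⟩
    rw [← h]; simp; ring
  rcases AddSubgroup.dense_or_cyclic (AddSubgroup.closure ({s 0, s 1} : Set ℝ)) with hd | ⟨g, hg⟩
  · obtain ⟨x, hx, hxd⟩ := hd.exists_dist_lt c (suppFn_pos hK hi hs hu)
    obtain ⟨m, n, rfl⟩ := hmem x hx
    exact ⟨m, n, by rw [← Real.dist_eq]; exact hxd.le⟩
  · have h0 : s 0 ∈ AddSubgroup.closure ({s 0, s 1} : Set ℝ) :=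
      AddSubgroup.subset_closure (by simp)
    have h1 : s 1 ∈ AddSubgroup.closure ({s 0, s 1} : Set ℝ) :=
      AddSubgroup.subset_closure (by simp)
    have hgm : g ∈ AddSubgroup.closure ({s 0, s 1} : Set ℝ) := by
      rw [hg]; exact AddSubgroup.subset_closure (by simp)
    rw [hg, AddSubgroup.mem_closure_singleton] at h0 h1
    obtain ⟨k, hk⟩ := h0
    obtain ⟨l, hl⟩ := h1
    rw [zsmul_eq_mul] at hk hl
    have hu2 : u = (g / 2) • ((k : ℝ) • p + (l : ℝ) • q) := by
      rw [hub, ← hk, ← hl]; module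
    have hg0 : g ≠ 0 := by
      rintro rfl; apply hu; rw [hu2]; simp
    have hkl : ¬ (k = 0 ∧ l = 0) := by
      rintro ⟨rfl, rfl⟩; apply hu; rw [hu2]; simp
    have hN := suppFn_lattice hK hne hs hp hq hpq k l hkl
    have hN2 : |g| / 2 ≤ suppFn K u := by
      rw [hu2, suppFn_smul_le hK hne hs, abs_div, abs_of_pos (two_pos : (0:ℝ) < 2)]
      have : 0 ≤ |g| / 2 := by positivity
      nlinarith
    obtain ⟨m, n, hgmn⟩ := hmem g hgm
    refine ⟨round (c / g) * m, round (c / g) * n, ?_⟩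
    refine le_trans ?_ hN2
    have : c - (s 0 * ((round (c / g) * m : ℤ) : ℝ) + s 1 * ((round (c / g) * n : ℤ) : ℝ)) =
        g * (c / g - round (c / g)) := by
      push_cast
      rw [mul_sub, mul_div_cancel₀ _ hg0]
      linear_combination (round (c / g) : ℝ) * hgmn
    rw [this, abs_mul]
    have := abs_sub_round (c / g)
    have := abs_nonneg g
    nlinarith

theorem triangle_area (a b c : Fin 2 → ℝ) :
    |(b 0 - a 0) * (c 1 - a 1) - (c 0 - a 0) * (b 1 - a 1)| / 2 ≤
      (volume (convexHull ℝ ({a, b, c} : Set (Fin 2 → ℝ)))).toReal := by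
  set T := convexHull ℝ ({a, b, c} : Set (Fin 2 → ℝ)) with hT
  have hfin : volume T ≠ ⊤ :=
    (Set.Finite.isCompact_convexHull ℝ
      (Set.toFinite ({a, b, c} : Set (Fin 2 → ℝ)))).measure_lt_top.ne
  set M : Matrix (Fin 2) (Fin 2) ℝ := !![b 0 - a 0, c 0 - a 0; b 1 - a 1, c 1 - a 1] with hM
  have hmem : ∀ x y : ℝ, 0 ≤ x → 0 ≤ y → x + y ≤ 1 → (1 - x - y) • a + x • b + y • c ∈ T := by
    intro x y hx hy hxy
    have ha : a ∈ T := subset_convexHull _ _ (by simp)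
    have hb : b ∈ T := subset_convexHull _ _ (by simp)
    have hc : c ∈ T := subset_convexHull _ _ (by simp)
    have := (convex_convexHull ℝ ({a, b, c} : Set (Fin 2 → ℝ))).sum_mem
      (t := Finset.univ) (w := ![1 - x - y, x, y]) (z := ![a, b, c])
      (by intro i _; fin_cases i <;> simp <;> linarith)
      (by simp [Fin.sum_univ_three]; ring)
      (by intro i _; fin_cases i <;> simpa)
    simpa [Fin.sum_univ_three] using this
  have hsub : (Matrix.toLin' M) '' (Icc 0 1) ⊆
      ((fun x => x + a) ⁻¹' T) ∪ (Neg.neg ⁻¹' ((fun x => x + (b + c - a)) ⁻¹' T)) := by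
    rintro _ ⟨z, ⟨hz0, hz1⟩, rfl⟩
    have h00 := hz0 0
    have h01 := hz0 1
    have h10 := hz1 0
    have h11 := hz1 1
    simp only [Pi.zero_apply, Pi.one_apply] at h00 h01 h10 h11
    by_cases h : z 0 + z 1 ≤ 1
    · left
      have e : Matrix.toLin' M z + a = (1 - z 0 - z 1) • a + z 0 • b + z 1 • c := by
        ext i
        fin_cases i <;> simp [hM, mulVec, dotProduct, Fin.sum_univ_two] <;> ring
      rw [mem_preimage, e]
      exact hmem (z 0) (z 1) h00 h01 h
    · right
      have e : -(Matrix.toLin' M z) + (b + c - a) =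
          (1 - (1 - z 0) - (1 - z 1)) • a + (1 - z 0) • b + (1 - z 1) • c := by
        ext i
        fin_cases i <;> simp [hM, mulVec, dotProduct, Fin.sum_univ_two] <;> ring
      rw [mem_preimage, mem_preimage, e]
      exact hmem (1 - z 0) (1 - z 1) (by linarith) (by linarith) (by linarith)
  have hvol := (measure_mono hsub).trans (measure_union_le (μ := volume) _ _)
  rw [Measure.measure_preimage_neg, measure_preimage_add_right, measure_preimage_add_right,
    Measure.addHaar_image_linearMap, Real.volume_Icc_pi, LinearMap.det_toLin'] at hvol
  have hdet : M.det = (b 0 - a 0) * (c 1 - a 1) - (c 0 - a 0) * (b 1 - a 1) := by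
    rw [hM, det_fin_two_of]
  rw [← hdet]
  have h2 := ENNReal.toReal_mono (ENNReal.add_ne_top.2 ⟨hfin, hfin⟩) hvol
  rw [ENNReal.toReal_add hfin hfin] at h2
  simp at h2
  linarith

/-- If `K ⊆ ℝ²` is a centrally symmetric convex body and there is a central triangle `T°`
(vertices on `∂K°`, barycenter at the origin) with `|K|·|T°| ≤ (3√3/4)π`,
then `d_{2,1}(K) ≤ √3·π/8`. -/
theorem d21_le_of_central_triangle (K : Set (Fin 2 → ℝ))
    (hKc : IsCompact K) (hKconv : Convex ℝ K) (hKint : (interior K).Nonempty)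
    (hsymm : K = -K)
    (p₁ p₂ p₃ : Fin 2 → ℝ)
    (hp₁ : p₁ ∈ frontier (polarBody K)) (hp₂ : p₂ ∈ frontier (polarBody K))
    (hp₃ : p₃ ∈ frontier (polarBody K))
    (hnd : ¬ Collinear ℝ ({p₁, p₂, p₃} : Set (Fin 2 → ℝ)))
    (hbary : p₁ + p₂ + p₃ = 0)
    (harea : (volume K).toReal *
        (volume (convexHull ℝ ({p₁, p₂, p₃} : Set (Fin 2 → ℝ)))).toReal ≤
      3 * Real.sqrt 3 / 4 * Real.pi) :
    dTrans K ≤ Real.sqrt 3 * Real.pi / 8 := by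
  have hne := hKint.mono interior_subset
  have hs : ∀ y ∈ K, -y ∈ K := by
    intro y hy
    rw [hsymm] at hy
    exact hy
  have h1 := suppFn_frontier hKc hne hp₁
  have h2 := suppFn_frontier hKc hne hp₂
  have h3 := suppFn_frontier hKc hne hp₃
  have e3 : p₃ = -(p₁ + p₂) := by rw [eq_neg_iff_add_eq_zero, add_comm]; exact hbary
  have h12 : suppFn K (p₁ + p₂) = 1 := by
    have := suppFn_smul_le hKc hne hs (-1) (p₁ + p₂)
    rw [neg_one_smul, ← e3, h3] at this
    simpa using this.symm
  set B : Matrix (Fin 2) (Fin 2) ℝ := !![p₁ 0 / 2, p₁ 1 / 2; p₂ 0 / 2, p₂ 1 / 2] with hB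
  have hBdet : B.det = (p₁ 0 * p₂ 1 - p₁ 1 * p₂ 0) / 4 := by
    rw [hB, det_fin_two_of]; ring
  have hdet : B.det ≠ 0 := by
    intro h0
    rw [hBdet] at h0
    have hcr : p₁ 0 * p₂ 1 = p₁ 1 * p₂ 0 := by linarith
    apply hnd
    have hp1 : p₁ ≠ 0 := by
      rintro rfl
      have := suppFn_smul_le hKc hne hs 0 (0 : Fin 2 → ℝ)
      rw [zero_smul, h1] at this
      simp at this
    have hd : 0 < p₁ 0 * p₁ 0 + p₁ 1 * p₁ 1 := by
      by_contra hcon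
      apply hp1
      have ha := mul_self_nonneg (p₁ 0)
      have hb := mul_self_nonneg (p₁ 1)
      ext i
      fin_cases i
      · exact (mul_self_eq_zero.1 (by linarith) : p₁ 0 = 0)
      · exact (mul_self_eq_zero.1 (by linarith) : p₁ 1 = 0)
    obtain ⟨t, ht⟩ : ∃ t : ℝ, p₂ = t • p₁ := by
      refine ⟨(p₁ 0 * p₂ 0 + p₁ 1 * p₂ 1) / (p₁ 0 * p₁ 0 + p₁ 1 * p₁ 1), ?_⟩
      ext i
      fin_cases i
      · simp only [Fin.zero_eta, Pi.smul_apply, smul_eq_mul]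
        rw [div_mul_eq_mul_div, eq_div_iff hd.ne']
        linear_combination (-p₁ 1) * hcr
      · simp only [Fin.mk_one, Pi.smul_apply, smul_eq_mul]
        rw [div_mul_eq_mul_div, eq_div_iff hd.ne']
        linear_combination (p₁ 0) * hcr
    rw [collinear_iff_exists_forall_eq_smul_vadd]
    refine ⟨0, p₁, ?_⟩
    intro p hp
    simp only [mem_insert_iff, mem_singleton_iff] at hp
    rcases hp with rfl | rfl | rfl
    · exact ⟨1, by simp⟩
    · exact ⟨t, by simpa using ht⟩
    · refine ⟨-(1 + t), ?_⟩
      rw [e3, ht, vadd_eq_add]; module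
  have hns := nonSeparable_aux hKc hKconv hKint hs h1 h2 h12 B hB hdet
  have hdi : (B⁻¹).det = (B.det)⁻¹ := by
    rw [det_nonsing_inv, Ring.inverse_eq_inv']
  have hle : dTrans K ≤ (volume K).toReal / |(B⁻¹).det| := by
    apply csInf_le
    · refine ⟨0, ?_⟩
      rintro d ⟨A, -, -, rfl⟩
      positivity
    · exact ⟨B⁻¹, by rw [hdi]; exact inv_ne_zero hdet, hns, rfl⟩
  refine hle.trans ?_
  rw [hdi, abs_inv, div_inv_eq_mul]
  have hT := triangle_area p₁ p₂ p₃
  have e : (p₂ 0 - p₁ 0) * (p₃ 1 - p₁ 1) - (p₃ 0 - p₁ 0) * (p₂ 1 - p₁ 1) = 12 * B.det := by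
    rw [hBdet, e3]; simp; ring
  rw [e, abs_mul, abs_of_pos (by norm_num : (0 : ℝ) < 12)] at hT
  have hV : 0 ≤ (volume K).toReal := ENNReal.toReal_nonneg
  nlinarith [mul_le_mul_of_nonneg_left hT hV]
end
end

section
/- For a convex body K in ℝⁿ, the lattice of translates ℤⁿ + K is non-separable if and only if the lattice width ω_K(u) := max_{x,y∈K} ⟨u, x−y⟩ satisfies ω_K(u) ≥ 1 for every u ∈ ℤⁿ \ {0}. -/
open MeasureTheory Set Matrix Pointwise

noncomputable section

/-- The integer lattice `ℤⁿ ⊆ ℝⁿ`. -/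
def intLattice (n : ℕ) : Set (Fin n → ℝ) :=
  Set.range fun m : Fin n → ℤ => fun i => (m i : ℝ)

/-- The lattice width of `K` at `u`: `ω_K(u) = max_{x,y ∈ K} ⟨u, x−y⟩`. -/
def latticeWidth {n : ℕ} (K : Set (Fin n → ℝ)) (u : Fin n → ℤ) : ℝ :=
  sSup {r : ℝ | ∃ x ∈ K, ∃ y ∈ K, r = (fun i => (u i : ℝ)) ⬝ᵥ (x - y)}

theorem aux_ivt {n : ℕ} {K : Set (Fin n → ℝ)} (hKconv : Convex ℝ K) (u : Fin n → ℝ)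
    {x y : Fin n → ℝ} (hx : x ∈ K) (hy : y ∈ K) {s : ℝ} (h1 : u ⬝ᵥ y ≤ s) (h2 : s ≤ u ⬝ᵥ x) :
    ∃ z ∈ K, u ⬝ᵥ z = s := by
  have hc : ContinuousOn (fun z : Fin n → ℝ => u ⬝ᵥ z) K :=
    (Continuous.dotProduct continuous_const continuous_id).continuousOn
  exact hKconv.isPreconnected.intermediate_value hy hx hc ⟨h1, h2⟩

theorem aux_pos {n : ℕ} {K : Set (Fin n → ℝ)} (hKint : (interior K).Nonempty)
    (u : Fin n → ℝ) (hu : u ≠ 0) : ∃ x ∈ K, ∃ y ∈ K, u ⬝ᵥ y < u ⬝ᵥ x := by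
  obtain ⟨p, hp⟩ := hKint
  have hc : Continuous (fun t : ℝ => p + t • u) := by fun_prop
  have h0 : (fun t : ℝ => p + t • u) ⁻¹' (interior K) ∈ nhds (0 : ℝ) :=
    (isOpen_interior.preimage hc).mem_nhds (by simpa using hp)
  obtain ⟨ε, he, hb⟩ := Metric.mem_nhds_iff.1 h0
  have hm : ε / 2 ∈ Metric.ball (0 : ℝ) ε := by
    rw [Metric.mem_ball, Real.dist_eq, sub_zero, abs_of_pos (by positivity)]
    linarith
  refine ⟨p + (ε / 2) • u, interior_subset (hb hm), p, interior_subset hp, ?_⟩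
  have hpos : 0 < u ⬝ᵥ u := by
    have h1 : 0 ≤ u ⬝ᵥ u := Finset.sum_nonneg fun i _ => mul_self_nonneg (u i)
    exact lt_of_le_of_ne h1 fun h => hu (dotProduct_self_eq_zero.1 h.symm)
  rw [dotProduct_add, dotProduct_smul, smul_eq_mul]
  have := mul_pos (half_pos he) hpos
  linarith

/-- `ℤⁿ + K` is non-separable iff `ω_K(u) ≥ 1` for all `u ∈ ℤⁿ \ {0}`. -/
theorem nonSeparable_iff_latticeWidth {n : ℕ} (K : Set (Fin n → ℝ))
    (hKc : IsCompact K) (hKconv : Convex ℝ K) (hKint : (interior K).Nonempty) :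
    NonSeparable (intLattice n) K ↔ ∀ u : Fin n → ℤ, u ≠ 0 → 1 ≤ latticeWidth K u := by
  have hne : K.Nonempty := hKint.mono interior_subset
  have hmm : ∀ v : Fin n → ℝ, ∃ x ∈ K, ∃ y ∈ K, ∀ z ∈ K, v ⬝ᵥ y ≤ v ⬝ᵥ z ∧ v ⬝ᵥ z ≤ v ⬝ᵥ x := by
    intro v
    have hc : ContinuousOn (fun z : Fin n → ℝ => v ⬝ᵥ z) K :=
      (Continuous.dotProduct continuous_const continuous_id).continuousOn
    obtain ⟨x, hx, hx'⟩ := hKc.exists_isMaxOn hne hc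
    obtain ⟨y, hy, hy'⟩ := hKc.exists_isMinOn hne hc
    exact ⟨x, hx, y, hy, fun z hz => ⟨hy' hz, hx' hz⟩⟩
  constructor
  · intro h u hu
    set v : Fin n → ℝ := fun i => (u i : ℝ) with hv
    have hv0 : v ≠ 0 := by
      intro h0
      apply hu
      funext i
      have := congrFun h0 i
      simpa [hv] using this
    obtain ⟨x, hx, y, hy, hxy⟩ := hmm v
    have hW : v ⬝ᵥ (x - y) ≤ latticeWidth K u := by
      apply le_csSup
      · refine ⟨v ⬝ᵥ (x - y), ?_⟩
        rintro r ⟨a, ha, b, hb, rfl⟩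
        change v ⬝ᵥ (a - b) ≤ _
        rw [dotProduct_sub, dotProduct_sub]
        linarith [(hxy a ha).2, (hxy b hb).1]
      · exact ⟨x, hx, y, hy, rfl⟩
    by_contra hlt
    push Not at hlt
    rw [dotProduct_sub] at hW
    obtain ⟨_, ⟨m, rfl⟩, z, hz, hzc⟩ := h v hv0 ((v ⬝ᵥ x + v ⬝ᵥ y + 1) / 2)
    rw [dotProduct_add] at hzc
    have hint : v ⬝ᵥ (fun i => (m i : ℝ)) = ((u ⬝ᵥ m : ℤ) : ℝ) := by
      simp [dotProduct, hv]
    simp only [hint] at hzc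
    have h1 := hxy z hz
    have h2 : (0 : ℝ) < ((u ⬝ᵥ m : ℤ) : ℝ) := by linarith
    have h3 : ((u ⬝ᵥ m : ℤ) : ℝ) < 1 := by linarith
    have h4 : (0 : ℤ) < u ⬝ᵥ m := by exact_mod_cast h2
    have h5 : u ⬝ᵥ m < (1 : ℤ) := by exact_mod_cast h3
    omega
  · intro h u hu c
    let f : (Fin n → ℤ) →+ ℝ :=
      { toFun := fun m => u ⬝ᵥ (fun i => (m i : ℝ))
        map_zero' := by simp [dotProduct]
        map_add' := by
          intro a b
          simp [dotProduct, mul_add, Finset.sum_add_distrib] }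
    have hf : ∀ m, f m = u ⬝ᵥ (fun i => (m i : ℝ)) := fun m => rfl
    suffices hs : ∃ m, ∃ x ∈ K, ∃ y ∈ K, u ⬝ᵥ y ≤ c - f m ∧ c - f m ≤ u ⬝ᵥ x by
      obtain ⟨m, x, hx, y, hy, h1, h2⟩ := hs
      obtain ⟨z, hz, hzc⟩ := aux_ivt hKconv u hx hy h1 h2
      refine ⟨_, ⟨m, rfl⟩, z, hz, ?_⟩
      rw [dotProduct_add, hzc, hf]
      ring
    rcases AddSubgroup.dense_or_cyclic f.range with hd | ⟨g, hg⟩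
    · obtain ⟨x, hx, y, hy, hxy⟩ := aux_pos hKint u hu
      obtain ⟨_, ⟨m, rfl⟩, h1, h2⟩ := hd.exists_between (show c - u ⬝ᵥ x < c - u ⬝ᵥ y by linarith)
      exact ⟨m, x, hx, y, hy, by linarith, by linarith⟩
    · have hmem : ∀ r, r ∈ f.range ↔ ∃ k : ℤ, k • g = r := by
        intro r
        rw [hg, AddSubgroup.mem_closure_singleton]
      have hk : ∀ i, ∃ k : ℤ, k • g = u i := by
        intro i
        rw [← hmem]
        refine ⟨Pi.single i 1, ?_⟩
        rw [hf]
        simp [dotProduct, Pi.single_apply]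
      choose k hk using hk
      have hg0 : g ≠ 0 := by
        rintro rfl
        apply hu
        funext i
        simp [← hk i]
      have hk0 : k ≠ 0 := by
        rintro rfl
        apply hu
        funext i
        simp [← hk i]
      obtain ⟨m, hm⟩ := (hmem g).2 ⟨1, one_smul _ _⟩
      set v : Fin n → ℝ := fun i => (k i : ℝ) with hv
      have huv : u = g • v := by
        funext i
        simp [hv, ← hk i, mul_comm]
      obtain ⟨x, hx, y, hy, hxy⟩ := hmm v
      have hW : latticeWidth K k ≤ v ⬝ᵥ (x - y) := by
        apply csSup_le
        · exact ⟨_, x, hx, y, hy, rfl⟩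
        · rintro r ⟨a, ha, b, hb, rfl⟩
          change v ⬝ᵥ (a - b) ≤ _
          rw [dotProduct_sub, dotProduct_sub]
          linarith [(hxy a ha).2, (hxy b hb).1]
      have hW1 := (h k hk0).trans hW
      rw [dotProduct_sub] at hW1
      -- an integer between `c / g - v ⬝ᵥ x` and `c / g - v ⬝ᵥ y`
      have j1 := Int.floor_le (c / g - v ⬝ᵥ y)
      have j2 := Int.lt_floor_add_one (c / g - v ⬝ᵥ y)
      set j : ℤ := ⌊c / g - v ⬝ᵥ y⌋
      have hfj : f (j • m) = j * g := by
        rw [map_zsmul, hm]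
        simp
      have hcg : c - f (j • m) = g * (c / g - j) := by
        rw [hfj]
        field_simp
      have hux : ∀ z, u ⬝ᵥ z = g * (v ⬝ᵥ z) := by
        intro z
        rw [huv, smul_dotProduct, smul_eq_mul]
      rcases lt_or_gt_of_ne hg0 with hneg | hpos
      · refine ⟨j • m, y, hy, x, hx, ?_, ?_⟩
        · rw [hcg, hux]
          exact mul_le_mul_of_nonpos_left (by linarith) hneg.le
        · rw [hcg, hux]
          exact mul_le_mul_of_nonpos_left (by linarith) hneg.le
      · refine ⟨j • m, x, hx, y, hy, ?_, ?_⟩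
        · rw [hcg, hux]
          exact mul_le_mul_of_nonneg_left (by linarith) hpos.le
        · rw [hcg, hux]
          exact mul_le_mul_of_nonneg_left (by linarith) hpos.le
end
end

section
/- Let K be a centrally symmetric convex body in ℝⁿ. Then ℤⁿ + K is non-separable if and only if ℤⁿ is admissible for (1/2)K°, i.e., ℤⁿ ∩ int((1/2)K°) = {0}. -/
open MeasureTheory Set Matrix Pointwise

noncomputable section

/-- Description of the interior of `(1/2)K°` for compact `K`. -/
lemma mem_interior_half_polar {n : ℕ} {K : Set (Fin n → ℝ)} (hKc : IsCompact K)
    (x : Fin n → ℝ) :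
    x ∈ interior ((2⁻¹ : ℝ) • polarBody K) ↔ ∀ y ∈ K, y ⬝ᵥ x < 1 / 2 := by
  have key : ∀ z : Fin n → ℝ, z ∈ (2⁻¹ : ℝ) • polarBody K ↔ ∀ y ∈ K, y ⬝ᵥ z ≤ 1 / 2 := by
    intro z
    rw [Set.mem_smul_set_iff_inv_smul_mem₀ (by norm_num)]
    simp only [polarBody, Set.mem_setOf_eq, dotProduct_smul, smul_eq_mul, inv_inv]
    refine forall₂_congr fun y _ => ?_
    constructor <;> intro h <;> linarith
  constructor
  · intro hx y hy
    have hcont : Filter.Tendsto (fun t : ℝ => t • x) (nhdsWithin 1 (Set.Ioi 1)) (nhds x) := by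
      have : Continuous (fun t : ℝ => t • x) := by fun_prop
      have h := this.tendsto 1
      rw [one_smul] at h
      exact h.mono_left nhdsWithin_le_nhds
    have h1 := hcont.eventually (mem_interior_iff_mem_nhds.1 hx)
    obtain ⟨t, ht, ht1⟩ := (h1.and self_mem_nhdsWithin).exists
    have h2 := (key _).1 ht y hy
    rw [dotProduct_smul, smul_eq_mul] at h2
    have ht1' : 1 < t := ht1
    by_contra hcon
    push Not at hcon
    nlinarith
  · intro h
    rw [mem_interior_iff_mem_nhds]
    have : ∀ᶠ z in nhds x, ∀ y ∈ K, y ⬝ᵥ z < 1 / 2 := by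
      apply hKc.eventually_forall_of_forall_eventually
      intro y hy
      have hc : Continuous (fun p : (Fin n → ℝ) × (Fin n → ℝ) => p.2 ⬝ᵥ p.1) := by
        exact Continuous.dotProduct continuous_snd continuous_fst
      exact hc.continuousAt.eventually_lt continuousAt_const (h y hy)
    filter_upwards [this] with z hz
    exact (key z).2 fun y hy => (hz y hy).le

/-- Linear functionals on a symmetric convex set take all intermediate values. -/
lemma exists_dot_eq {n : ℕ} {K : Set (Fin n → ℝ)} (hKconv : Convex ℝ K)
    (hneg : ∀ y ∈ K, -y ∈ K) (u y : Fin n → ℝ) (hy : y ∈ K) (d : ℝ)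
    (hpos : 0 < u ⬝ᵥ y) (hd : |d| ≤ u ⬝ᵥ y) : ∃ z ∈ K, u ⬝ᵥ z = d := by
  set a := u ⬝ᵥ y with ha
  obtain ⟨hd1, hd2⟩ := abs_le.1 hd
  refine ⟨((a + d) / (2 * a)) • y + ((a - d) / (2 * a)) • (-y),
    hKconv hy (hneg y hy) ?_ ?_ ?_, ?_⟩
  · exact div_nonneg (by linarith) (by linarith)
  · exact div_nonneg (by linarith) (by linarith)
  · field_simp; ring
  · simp only [dotProduct_add, dotProduct_smul, dotProduct_neg, smul_eq_mul, ← ha]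
    field_simp; ring

/-- For a centrally symmetric convex body `K ⊆ ℝⁿ`, the lattice of translates `ℤⁿ + K`
is non-separable iff `ℤⁿ` is admissible for `(1/2)K°`. -/
theorem nonSeparable_iff_admissible_half_polar {n : ℕ} (K : Set (Fin n → ℝ))
    (hKc : IsCompact K) (hKconv : Convex ℝ K) (hKint : (interior K).Nonempty)
    (hsymm : K = -K) :
    NonSeparable (intLattice n) K ↔
      intLattice n ∩ interior ((2⁻¹ : ℝ) • polarBody K) = {0} := by
  have hneg : ∀ y ∈ K, -y ∈ K := by
    intro y hy
    rw [hsymm] at hy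
    exact hy
  constructor
  · intro hns
    ext x
    simp only [Set.mem_inter_iff, Set.mem_singleton_iff, mem_interior_half_polar hKc]
    constructor
    · rintro ⟨⟨m, rfl⟩, hlt⟩
      by_contra hne
      obtain ⟨_, ⟨k, rfl⟩, y, hy, hxy⟩ := hns _ hne (1 / 2)
      have h1 := hlt y hy
      have h2 := hlt (-y) (hneg y hy)
      rw [dotProduct_comm] at h1
      rw [dotProduct_comm, dotProduct_neg] at h2
      rw [dotProduct_add] at hxy
      have h3 : (fun i => (m i : ℝ)) ⬝ᵥ (fun i => (k i : ℝ)) = ((∑ i, m i * k i : ℤ) : ℝ) := by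
        simp [dotProduct]
      rw [h3] at hxy
      have h4 : (0 : ℝ) < ((∑ i, m i * k i : ℤ) : ℝ) := by linarith
      have h5 : ((∑ i, m i * k i : ℤ) : ℝ) < 1 := by linarith
      have h6 : 0 < (∑ i, m i * k i : ℤ) := by exact_mod_cast h4
      have h7 : (∑ i, m i * k i : ℤ) < 1 := by exact_mod_cast h5
      omega
    · rintro rfl
      refine ⟨⟨0, ?_⟩, ?_⟩
      · ext i; simp
      · intro y _; simp
  · intro hadm u hu c
    -- the group of values of `u` on the integer lattice
    let f : (Fin n → ℤ) →+ ℝ :=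
      { toFun := fun m => u ⬝ᵥ (fun i => (m i : ℝ))
        map_zero' := by simp [dotProduct]
        map_add' := by
          intro a b
          simp [dotProduct, mul_add, Finset.sum_add_distrib] }
    have hf : ∀ m, f m = u ⬝ᵥ (fun i => (m i : ℝ)) := fun _ => rfl
    suffices H : ∃ m : Fin n → ℤ, ∃ y ∈ K, 0 < u ⬝ᵥ y ∧ |c - f m| ≤ u ⬝ᵥ y by
      obtain ⟨m, y, hy, hpos, hle⟩ := H
      obtain ⟨z, hz, hzd⟩ := exists_dot_eq hKconv hneg u y hy _ hpos hle
      refine ⟨_, ⟨m, rfl⟩, z, hz, ?_⟩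
      rw [dotProduct_add, hzd, hf]
      ring
    rcases AddSubgroup.dense_or_cyclic f.range with hdense | ⟨s, hs⟩
    · have hpos : ∃ y ∈ K, 0 < u ⬝ᵥ y := by
        obtain ⟨p, hp⟩ := hKint
        have hcont : Filter.Tendsto (fun t : ℝ => p + t • u) (nhdsWithin 0 (Set.Ioi 0))
            (nhds p) := by
          have : Continuous (fun t : ℝ => p + t • u) := by fun_prop
          have h := this.tendsto 0
          simp only [zero_smul, add_zero] at h
          exact h.mono_left nhdsWithin_le_nhds
        have h1 := hcont.eventually (mem_interior_iff_mem_nhds.1 hp)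
        obtain ⟨t, ht, ht0⟩ := (h1.and self_mem_nhdsWithin).exists
        have ht0' : 0 < t := ht0
        have huu : 0 < u ⬝ᵥ u := by
          refine lt_of_le_of_ne ?_ fun h => hu (dotProduct_self_eq_zero.1 h.symm)
          exact Finset.sum_nonneg fun i _ => mul_self_nonneg _
        by_cases hpp : 0 ≤ u ⬝ᵥ p
        · refine ⟨_, ht, ?_⟩
          rw [dotProduct_add, dotProduct_smul, smul_eq_mul]
          positivity
        · refine ⟨-p, hneg _ (interior_subset hp), ?_⟩
          rw [dotProduct_neg]
          linarith
      obtain ⟨y, hy, hy0⟩ := hpos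
      obtain ⟨r, hr, hrd⟩ := hdense.exists_dist_lt c hy0
      obtain ⟨m, rfl⟩ := hr
      exact ⟨m, y, hy, hy0, by rw [Real.dist_eq] at hrd; exact hrd.le⟩
    · have hmem : ∀ r : ℝ, r ∈ f.range ↔ ∃ k : ℤ, (k : ℝ) * s = r := by
        intro r
        rw [hs, AddSubgroup.mem_closure_singleton]
        simp
      have hcoord : ∀ i, ∃ k : ℤ, (k : ℝ) * s = u i := by
        intro i
        rw [← hmem]
        refine ⟨Pi.single i 1, ?_⟩
        rw [hf]
        simp [dotProduct, Pi.single_apply]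
      choose w hw using hcoord
      have huw : u = s • (fun i => (w i : ℝ)) := by
        ext i
        simp [← hw i, mul_comm]
      have hs0 : s ≠ 0 := by
        rintro rfl
        exact hu (by simpa using huw)
      have hw0 : (fun i => (w i : ℝ)) ≠ 0 := by
        intro h
        exact hu (by rw [huw, h, smul_zero])
      have hex : ∃ y ∈ K, 1 / 2 ≤ y ⬝ᵥ (fun i => (w i : ℝ)) := by
        by_contra hcon
        push Not at hcon
        have : (fun i => (w i : ℝ)) ∈ intLattice n ∩ interior ((2⁻¹ : ℝ) • polarBody K) :=
          ⟨⟨w, rfl⟩, (mem_interior_half_polar hKc _).2 hcon⟩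
        rw [hadm] at this
        exact hw0 this
      obtain ⟨y, hy, hyw⟩ := hex
      have habs : ∃ z ∈ K, |s| / 2 ≤ u ⬝ᵥ z := by
        have huy : u ⬝ᵥ y = s * (y ⬝ᵥ (fun i => (w i : ℝ))) := by
          rw [huw, smul_dotProduct, dotProduct_comm, smul_eq_mul]
        rcases le_total 0 s with h | h
        · refine ⟨y, hy, ?_⟩
          rw [huy, abs_of_nonneg h]
          nlinarith
        · refine ⟨-y, hneg y hy, ?_⟩
          rw [dotProduct_neg, huy, abs_of_nonpos h]
          nlinarith
      obtain ⟨z, hz, hzs⟩ := habs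
      obtain ⟨m, hm⟩ := (hmem (round (c / s) * s)).2 ⟨_, rfl⟩
      have hsp : 0 < |s| := abs_pos.2 hs0
      refine ⟨m, z, hz, by linarith, le_trans ?_ hzs⟩
      rw [hm]
      have h1 : c - round (c / s) * s = (c / s - round (c / s)) * s := by
        field_simp
      rw [h1, abs_mul]
      have h2 := abs_sub_round (c / s)
      nlinarith
end
end

section
/- Let K be a centrally symmetric convex body in ℝ² with boundary C, and let Λ be a K-critical lattice. Then there exist three pairs of lattice points ±p₁, ±p₂, ±p₃ of Λ lying on C, which can be chosen so that p₁ + p₂ = p₃ and any two of p₁, p₂, p₃ form a basis of Λ. Conversely, if points p₁, p₂, p₃ on C satisfy p₁ + p₂ = p₃, then the lattice generated by p₁ and p₂ is K-admissible. -/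
open MeasureTheory Set Matrix Pointwise

noncomputable section

/-- A set `Λ` is `K`-admissible if it meets the interior of `K` only in `0`. -/
def Admissible {n : ℕ} (Λ K : Set (Fin n → ℝ)) : Prop :=
  Λ ∩ interior K = {0}

/-- The critical determinant `Δ(K)`: the smallest determinant of a `K`-admissible lattice. -/
def critDet {n : ℕ} (K : Set (Fin n → ℝ)) : ℝ :=
  sInf {d : ℝ | ∃ A : Matrix (Fin n) (Fin n) ℝ, A.det ≠ 0 ∧
    Admissible (latticeOf A) K ∧ d = |A.det|}

/-- The densest lattice packing density `δ_L(K) = |K| / (2ⁿ Δ(K))` of a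
centrally symmetric convex body `K ⊆ ℝⁿ`. -/
def deltaL {n : ℕ} (K : Set (Fin n → ℝ)) : ℝ :=
  (volume K).toReal / (2 ^ n * critDet K)

/-- `v, w` form a basis of `Λ`: they generate `Λ` as a group. -/
def IsLatticeBasis (v w : Fin 2 → ℝ) (Λ : Set (Fin 2 → ℝ)) : Prop :=
  Λ = Set.range fun mn : ℤ × ℤ => (mn.1 : ℝ) • v + (mn.2 : ℝ) • w

/-- Lower bound for a seminorm along a line, past the unit step. -/
lemma line_bound {g : (Fin 2 → ℝ) → ℝ} (hadd : ∀ x y, g (x + y) ≤ g x + g y)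
    (hsm : ∀ (t : ℝ) x, g (t • x) = |t| * g x) (u v : Fin 2 → ℝ)
    (h : g v ≤ g (v + u)) (t : ℝ) (ht : 1 ≤ t) : g v ≤ g (v + t • u) := by
  have h1 : t • (v + u) = (t - 1) • v + (v + t • u) := by module
  have h2 := hadd ((t - 1) • v) (v + t • u)
  rw [← h1, hsm, hsm, abs_of_nonneg (by linarith), abs_of_nonneg (by linarith)] at h2
  nlinarith

lemma seminorm_neg {g : (Fin 2 → ℝ) → ℝ}
    (hsm : ∀ (t : ℝ) x, g (t • x) = |t| * g x) (x : Fin 2 → ℝ) : g (-x) = g x := by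
  have := hsm (-1) x
  simpa using this

lemma seminorm_sub {g : (Fin 2 → ℝ) → ℝ} (hadd : ∀ x y, g (x + y) ≤ g x + g y)
    (hsm : ∀ (t : ℝ) x, g (t • x) = |t| * g x) (x y : Fin 2 → ℝ) : g x - g y ≤ g (x + y) := by
  have := hadd (x + y) (-y)
  rw [seminorm_neg hsm] at this
  simp only [add_neg_cancel_right] at this
  linarith

/-- A reduced pair of unit vectors spans an admissible lattice. -/
lemma reduced_unit {g : (Fin 2 → ℝ) → ℝ} (hadd : ∀ x y, g (x + y) ≤ g x + g y)
    (hsm : ∀ (t : ℝ) x, g (t • x) = |t| * g x) (u v : Fin 2 → ℝ)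
    (hu : g u = 1) (hv : g v = 1) (hp : 1 ≤ g (v + u)) (hm : 1 ≤ g (v - u))
    (m n : ℤ) (hmn : (m, n) ≠ (0, 0)) : 1 ≤ g ((m : ℝ) • u + (n : ℝ) • v) := by
  have h1 := seminorm_sub hadd hsm ((m : ℝ) • u) ((n : ℝ) • v)
  have h2 := seminorm_sub hadd hsm ((n : ℝ) • v) ((m : ℝ) • u)
  rw [add_comm ((n : ℝ) • v)] at h2
  rw [hsm, hsm, hu, hv] at h1 h2
  rcases lt_trichotomy |m| |n| with h | h | h
  · have : |m| + 1 ≤ |n| := h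
    have : |(m : ℝ)| + 1 ≤ |(n : ℝ)| := by exact_mod_cast this
    linarith
  · have hm1 : 1 ≤ |m| := by
      apply Int.one_le_abs
      rintro rfl
      apply hmn
      rw [abs_zero] at h
      rw [abs_eq_zero.1 h.symm]
    have hm1 : (1 : ℝ) ≤ |(m : ℝ)| := by exact_mod_cast hm1
    rcases abs_eq_abs.1 h with h | h
    · subst h
      have : (m : ℝ) • u + (m : ℝ) • v = (m : ℝ) • (v + u) := by module
      rw [this, hsm]; nlinarith
    · have : (m : ℝ) • u + (n : ℝ) • v = (-m : ℝ) • (v - u) := by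
        subst h; push_cast; module
      rw [this, hsm, abs_neg]; nlinarith
  · have : |n| + 1 ≤ |m| := h
    have : |(n : ℝ)| + 1 ≤ |(m : ℝ)| := by exact_mod_cast this
    linarith

/-- The planar determinant of two vectors. -/
def D2 (x y : Fin 2 → ℝ) : ℝ := x 0 * y 1 - x 1 * y 0

/-- Perturbation argument. -/
lemma perturb {g : (Fin 2 → ℝ) → ℝ} (hadd : ∀ x y, g (x + y) ≤ g x + g y)
    (hsm : ∀ (t : ℝ) x, g (t • x) = |t| * g x) (u v : Fin 2 → ℝ)
    (hD : D2 u v ≠ 0) (hu1 : 1 ≤ g u) (huv : g u ≤ g v) (hp : g v ≤ g (v + u))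
    (hm : g v ≤ g (v - u))
    (hc : ∀ a b, D2 a b ≠ 0 → g a = 1 → g b = 1 → 1 ≤ g (b + a) → 1 ≤ g (b - a) →
      |D2 u v| ≤ |D2 a b|) :
    g u = 1 ∧ g v = 1 ∧ (g (v + u) = 1 ∨ g (v - u) = 1) := by
  have hDpos : 0 < |D2 u v| := abs_pos.2 hD
  have hneg := seminorm_neg hsm
  have hsub := seminorm_sub hadd hsm
  have hscale : ∀ s t : ℝ, D2 (s • u) (t • v) = s * t * D2 u v := by
    intro s t; simp [D2]; ring
  have hup : 0 < g u := by linarith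
  have hvp : 0 < g v := by linarith
  have hmul : g u * g v ≤ 1 := by
    have hq : 1 ≤ g v / g u := by rwa [le_div_iff₀ hup, one_mul]
    have e1 : (g v)⁻¹ • v + (g u)⁻¹ • u = (g v)⁻¹ • (v + (g v / g u) • u) := by
      rw [smul_add, smul_smul]; congr 2; field_simp
    have e2 : (g v)⁻¹ • v - (g u)⁻¹ • u = (g v)⁻¹ • (v + (g v / g u) • (-u)) := by
      rw [smul_add, smul_smul, smul_neg, sub_eq_add_neg]; congr 3; field_simp
    have l1 := line_bound hadd hsm u v hp _ hq
    have l2 := line_bound hadd hsm (-u) v (by rwa [← sub_eq_add_neg]) _ hq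
    have := hc ((g u)⁻¹ • u) ((g v)⁻¹ • v) (by rw [hscale]; positivity)
      (by rw [hsm, abs_of_pos (by positivity)]; field_simp)
      (by rw [hsm, abs_of_pos (by positivity)]; field_simp)
      (by rw [e1, hsm, abs_of_pos (by positivity), inv_mul_eq_div, le_div_iff₀ hvp]; linarith)
      (by rw [e2, hsm, abs_of_pos (by positivity), inv_mul_eq_div, le_div_iff₀ hvp]; linarith)
    rw [hscale, abs_mul, abs_of_pos (a := (g u)⁻¹ * (g v)⁻¹) (by positivity)] at this
    have h3 : 1 ≤ (g u)⁻¹ * (g v)⁻¹ := by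
      by_contra hcon
      push Not at hcon
      nlinarith
    rw [← mul_inv] at h3
    have h4 : 0 < g u * g v := by positivity
    exact (one_le_inv₀ h4).1 h3
  have hu : g u = 1 := by nlinarith
  have hv : g v = 1 := by rw [hu] at hmul; linarith
  refine ⟨hu, hv, ?_⟩
  by_contra hcon
  push Not at hcon
  have hp' : 1 < g (v + u) := lt_of_le_of_ne (by linarith) hcon.1.symm
  have hm' : 1 < g (v - u) := lt_of_le_of_ne (by linarith) hcon.2.symm
  obtain ⟨η, hη, hp2, hm2⟩ : ∃ η : ℝ, 0 < η ∧ 1 + η ≤ g (v + u) ∧ 1 + η ≤ g (v - u) :=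
    ⟨min (g (v + u)) (g (v - u)) - 1, by simp [hp', hm'], by simp, by simp⟩
  obtain ⟨ε, hε, hε1, hε2, hε3⟩ : ∃ ε : ℝ, 0 < ε ∧ ε < 1 ∧ 3 * ε ≤ η ∧ ε * (1 + η) ≤ η := by
    refine ⟨η / (3 * (1 + η)), by positivity, ?_, ?_, ?_⟩
    · rw [div_lt_one (by positivity)]; linarith
    · rw [← mul_div_assoc, div_le_iff₀ (by positivity)]; nlinarith
    · rw [div_mul_eq_mul_div, div_le_iff₀ (by positivity)]; nlinarith
  -- moving one vector along the other does not increase it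
  have key : ∀ x y : Fin 2 → ℝ, |D2 x y| = |D2 u v| → g x = 1 → g y = 1 → 1 + η ≤ g (y + x) →
      1 + η ≤ g (y - x) → ∀ s : ℝ, |s| = ε → g (y + s • x) ≤ 1 := by
    intro x y hxy hx hy hyp hym s hs
    by_contra hgt
    push Not at hgt
    set F := g (y + s • x) with hF
    have hFp : 0 < F := by linarith
    have hFle : F ≤ 1 + ε := by
      have := hadd y (s • x)
      rw [hsm, hs, hx, hy] at this; linarith
    have b1 : ∀ w : Fin 2 → ℝ, 1 + η ≤ g (y + w) → g w = 1 →
        1 ≤ g (F⁻¹ • (y + s • x) + w) := by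
      intro w hw hw1
      have e : F⁻¹ • (y + s • x) + w = F⁻¹ • ((y + w) + (s • x + (F - 1) • w)) := by
        have : w = F⁻¹ • (F • w) := by rw [smul_smul, inv_mul_cancel₀ hFp.ne', one_smul]
        nth_rw 1 [this]
        module
      rw [e, hsm, abs_of_pos (by positivity), inv_mul_eq_div, le_div_iff₀ hFp]
      have h1 := hsub (y + w) (s • x + (F - 1) • w)
      have h2 := hadd (s • x) ((F - 1) • w)
      rw [hsm, hsm, hs, hx, hw1, abs_of_pos (by linarith)] at h2
      linarith
    have hdet : D2 x (F⁻¹ • (y + s • x)) = F⁻¹ * D2 x y := by simp [D2]; ring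
    have hab : |D2 x (F⁻¹ • (y + s • x))| = F⁻¹ * |D2 u v| := by
      rw [hdet, abs_mul, hxy, abs_of_pos (by positivity)]
    have := hc x (F⁻¹ • (y + s • x)) (by rw [← abs_pos, hab]; positivity) hx
      (by rw [hsm, abs_of_pos (by positivity), ← hF]; field_simp)
      (b1 x hyp hx)
      (by rw [sub_eq_add_neg]; exact b1 (-x) (by rwa [← sub_eq_add_neg]) (by rw [hneg, hx]))
    rw [hab] at this
    have h5 : F⁻¹ < 1 := inv_lt_one_of_one_lt₀ hgt
    nlinarith
  -- midpoint convexity then forces equality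
  have key2 : ∀ x y : Fin 2 → ℝ, |D2 x y| = |D2 u v| → g x = 1 → g y = 1 → 1 + η ≤ g (y + x) →
      1 + η ≤ g (y - x) → g (y + ε • x) = 1 := by
    intro x y hxy hx hy hyp hym
    have k1 := key x y hxy hx hy hyp hym ε (abs_of_pos hε)
    have k2 := key x y hxy hx hy hyp hym (-ε) (by rw [abs_neg, abs_of_pos hε])
    have h1 := hadd (y + ε • x) (y + (-ε) • x)
    have e : y + ε • x + (y + (-ε) • x) = (2 : ℝ) • y := by module
    rw [e, hsm, hy, abs_of_pos (by norm_num)] at h1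
    linarith
  have f1 := key2 u v rfl hu hv hp2 hm2
  have f2 := key2 v u (by rw [← abs_neg]; congr 1; simp [D2]; ring) hv hu (by rwa [add_comm u v])
    (by rwa [← hneg, neg_sub])
  have hdet : |D2 (u + ε • v) (v + ε • u)| = (1 - ε ^ 2) * |D2 u v| := by
    have : D2 (u + ε • v) (v + ε • u) = (1 - ε ^ 2) * D2 u v := by simp [D2]; ring
    rw [this, abs_mul, abs_of_pos (by nlinarith)]
  have := hc (u + ε • v) (v + ε • u)
    (by rw [← abs_pos, hdet]; apply mul_pos (by nlinarith) hDpos) f2 f1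
    (by
      have e : v + ε • u + (u + ε • v) = (1 + ε) • (v + u) := by module
      rw [e, hsm, abs_of_pos (by linarith)]; nlinarith)
    (by
      have e : v + ε • u - (u + ε • v) = (1 - ε) • (v - u) := by module
      rw [e, hsm, abs_of_pos (by linarith)]; nlinarith)
  rw [hdet] at this
  nlinarith [mul_pos (pow_pos hε 2) hDpos]

/-- Unimodular change of basis. -/
lemma basis_change {a b : Fin 2 → ℝ} {L : Set (Fin 2 → ℝ)} (h : IsLatticeBasis a b L)
    (m n k l : ℤ) (hd : (m * l - n * k) ^ 2 = 1) :
    IsLatticeBasis ((m : ℝ) • a + (n : ℝ) • b) ((k : ℝ) • a + (l : ℝ) • b) L := by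
  unfold IsLatticeBasis at *
  rw [h]
  ext x
  constructor
  · rintro ⟨⟨r, s⟩, rfl⟩
    refine ⟨((m * l - n * k) * (r * l - s * k), (m * l - n * k) * (s * m - r * n)), ?_⟩
    have hd' : ((m : ℝ) * l - n * k) ^ 2 = 1 := by exact_mod_cast hd
    ext i
    simp
    linear_combination (r * a i + s * b i) * hd'
  · rintro ⟨⟨r, s⟩, rfl⟩
    refine ⟨(r * m + s * k, r * n + s * l), ?_⟩
    ext i
    simp
    ring

lemma latticeOf_basis (A : Matrix (Fin 2) (Fin 2) ℝ) :
    IsLatticeBasis (fun i => A i 0) (fun i => A i 1) (latticeOf A) := by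
  unfold IsLatticeBasis latticeOf
  ext x
  constructor
  · rintro ⟨m, rfl⟩
    refine ⟨(m 0, m 1), ?_⟩
    ext i
    simp [Matrix.mulVec, dotProduct, Fin.sum_univ_two]
    ring
  · rintro ⟨⟨r, s⟩, rfl⟩
    refine ⟨![r, s], ?_⟩
    ext i
    simp [Matrix.mulVec, dotProduct, Fin.sum_univ_two]
    ring

/-- Existence of a reduced basis. -/
lemma exists_reduced {g : (Fin 2 → ℝ) → ℝ} (R : ℝ) (hR : ∀ x, ‖x‖ ≤ R * g x)
    (hg0 : ∀ x, 0 ≤ g x)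
    (a b : Fin 2 → ℝ) (hD : D2 a b ≠ 0) (L : Set (Fin 2 → ℝ)) (hL : IsLatticeBasis a b L) :
    ∃ u v, IsLatticeBasis u v L ∧ |D2 u v| = |D2 a b| ∧ g u ≤ g v ∧ g v ≤ g (v + u) ∧
      g v ≤ g (v - u) := by
  -- coefficients are controlled by g
  obtain ⟨C, hC⟩ : ∃ C : ℝ, ∀ m n : ℤ, |(m : ℝ)| ≤ C * g ((m : ℝ) • a + (n : ℝ) • b) ∧
      |(n : ℝ)| ≤ C * g ((m : ℝ) • a + (n : ℝ) • b) := by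
    have gen : ∀ w x : Fin 2 → ℝ, |D2 w x| ≤ (|w 0| + |w 1|) * ‖x‖ := by
      intro w x
      have h0 := norm_le_pi_norm x 0
      have h1 := norm_le_pi_norm x 1
      rw [Real.norm_eq_abs] at h0 h1
      unfold D2
      have := abs_sub (w 0 * x 1) (w 1 * x 0)
      rw [abs_mul, abs_mul] at this
      nlinarith [abs_nonneg (w 0), abs_nonneg (w 1)]
    have hDp : 0 < |D2 a b| := abs_pos.2 hD
    have gen2 : ∀ w x : Fin 2 → ℝ, |D2 w x| ≤ (|w 0| + |w 1|) * (|R| * g x) := by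
      intro w x
      refine (gen w x).trans ?_
      gcongr
      exact (hR x).trans (mul_le_mul_of_nonneg_right (le_abs_self R) (hg0 x))
    refine ⟨((|a 0| + |a 1|) + (|b 0| + |b 1|)) * |R| / |D2 a b|, fun m n => ?_⟩
    set x := (m : ℝ) • a + (n : ℝ) • b with hx
    have ea : D2 a x = n * D2 a b := by simp [hx, D2]; ring
    have eb : D2 b x = -m * D2 a b := by simp [hx, D2]; ring
    have ha := gen2 a x
    have hb := gen2 b x
    rw [ea, abs_mul] at ha
    rw [eb, abs_mul, abs_neg] at hb
    have p1 : 0 ≤ (|a 0| + |a 1|) * (|R| * g x) := mul_nonneg (by positivity) (mul_nonneg (by positivity) (hg0 x))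
    have p2 : 0 ≤ (|b 0| + |b 1|) * (|R| * g x) := mul_nonneg (by positivity) (mul_nonneg (by positivity) (hg0 x))
    constructor
    · rw [div_mul_eq_mul_div, le_div_iff₀ hDp]; linarith
    · rw [div_mul_eq_mul_div, le_div_iff₀ hDp]; linarith
  let P : ℤ × ℤ → Fin 2 → ℝ := fun q => (q.1 : ℝ) • a + (q.2 : ℝ) • b
  let f : (ℤ × ℤ) × (ℤ × ℤ) → ℝ := fun q => g (P q.1) + g (P q.2)
  have hf : Filter.Tendsto f Filter.cofinite Filter.atTop := by
    rw [Filter.tendsto_atTop]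
    intro r
    rw [Filter.eventually_cofinite]
    let N : ℤ := ⌈|C| * r⌉
    refine Set.Finite.subset (((Set.finite_Icc (-N) N).prod (Set.finite_Icc (-N) N)).prod
      ((Set.finite_Icc (-N) N).prod (Set.finite_Icc (-N) N))) ?_
    rintro ⟨⟨m, n⟩, ⟨k, l⟩⟩ hq
    simp only [Set.mem_ofPred_eq, not_le, f, P] at hq
    have g1 := hg0 ((m : ℝ) • a + (n : ℝ) • b)
    have g2 := hg0 ((k : ℝ) • a + (l : ℝ) • b)
    have fin : ∀ (z : ℤ) (t : ℝ), |(z : ℝ)| ≤ C * t → 0 ≤ t → t ≤ r → z ∈ Set.Icc (-N) N := by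
      intro z t hz ht htr
      have : |(z : ℝ)| ≤ N := by
        refine le_trans ?_ (Int.le_ceil _)
        refine hz.trans ((mul_le_mul_of_nonneg_right (le_abs_self C) ht).trans ?_)
        gcongr
      have : |z| ≤ N := by exact_mod_cast this
      exact abs_le.1 this
    exact ⟨⟨fin _ _ (hC m n).1 g1 (by linarith), fin _ _ (hC m n).2 g1 (by linarith)⟩,
      ⟨fin _ _ (hC k l).1 g2 (by linarith), fin _ _ (hC k l).2 g2 (by linarith)⟩⟩
  let S : Set ((ℤ × ℤ) × (ℤ × ℤ)) := {q | (q.1.1 * q.2.2 - q.1.2 * q.2.1) ^ 2 = 1}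
  obtain ⟨q0, hq0, hmin0⟩ := hf.exists_within_forall_le (s := S) ⟨((1, 0), (0, 1)), by simp [S]⟩
  -- order the pair
  obtain ⟨q, hq, hmin, hle⟩ : ∃ q ∈ S, (∀ q' ∈ S, f q ≤ f q') ∧ g (P q.1) ≤ g (P q.2) := by
    rcases le_total (g (P q0.1)) (g (P q0.2)) with h | h
    · exact ⟨q0, hq0, hmin0, h⟩
    · refine ⟨(q0.2, q0.1), ?_, ?_, h⟩
      · simp only [S, Set.mem_ofPred_eq] at hq0 ⊢
        rw [← hq0]; ring
      · intro q' hq'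
        have := hmin0 q' hq'
        simp only [f] at this ⊢
        linarith
  obtain ⟨⟨m, n⟩, ⟨k, l⟩⟩ := q
  simp only [S, Set.mem_ofPred_eq] at hq
  refine ⟨P (m, n), P (k, l), basis_change hL m n k l hq, ?_, hle, ?_, ?_⟩
  · have e : D2 (P (m, n)) (P (k, l)) = ((m * l - n * k : ℤ) : ℝ) * D2 a b := by
      simp [P, D2]; ring
    have h1 : |((m * l - n * k : ℤ) : ℝ)| = 1 := by
      rcases mul_self_eq_one_iff.1 ((sq _).symm.trans hq) with h | h <;> rw [h] <;> simp
    rw [e, abs_mul, h1, one_mul]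
  · have := hmin ((m, n), (k + m, l + n)) (by simp only [S, Set.mem_ofPred_eq]; rw [← hq]; ring)
    simp only [f] at this
    have e : P (k + m, l + n) = P (k, l) + P (m, n) := by simp only [P]; push_cast; module
    rw [e] at this
    linarith
  · have := hmin ((m, n), (k - m, l - n)) (by simp only [S, Set.mem_ofPred_eq]; rw [← hq]; ring)
    simp only [f] at this
    have e : P (k - m, l - n) = P (k, l) - P (m, n) := by simp only [P]; push_cast; module
    rw [e] at this
    linarith

/-- The gauge of a symmetric convex body. -/
lemma exists_gauge (K : Set (Fin 2 → ℝ))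
    (hKc : IsCompact K) (hKconv : Convex ℝ K) (hKint : (interior K).Nonempty)
    (hsymm : K = -K) :
    ∃ (g : (Fin 2 → ℝ) → ℝ) (R : ℝ), (∀ x y, g (x + y) ≤ g x + g y) ∧
      (∀ (t : ℝ) x, g (t • x) = |t| * g x) ∧ (∀ x, 0 ≤ g x) ∧ (∀ x, ‖x‖ ≤ R * g x) ∧
      (∀ x, x ∈ interior K ↔ g x < 1) ∧ (∀ x, x ∈ frontier K ↔ g x = 1) := by
  have hs : ∀ x ∈ K, -x ∈ K := by
    intro x hx; rw [hsymm] at hx; exact hx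
  have h0 : (0 : Fin 2 → ℝ) ∈ interior K := by
    obtain ⟨x, hx⟩ := hKint
    have hx' : -x ∈ interior K := by
      have : interior K = -interior K := by
        conv_lhs => rw [hsymm]
        exact ((Homeomorph.neg (Fin 2 → ℝ)).preimage_interior K).symm
      rw [this]; simpa using hx
    have := hKconv.interior hx hx' (a := 1/2) (b := 1/2) (by norm_num) (by norm_num) (by norm_num)
    simpa using this
  have hn : K ∈ nhds (0 : Fin 2 → ℝ) := mem_interior_iff_mem_nhds.1 h0
  have habs : Absorbent ℝ K := absorbent_nhds_zero hn
  obtain ⟨r, hr, hKr⟩ := hKc.isBounded.subset_closedBall_lt 0 0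
  refine ⟨gauge K, r, gauge_add_le hKconv habs, ?_, gauge_nonneg, ?_, ?_, ?_⟩
  · intro t x
    rcases le_total 0 t with h | h
    · rw [gauge_smul_of_nonneg h, abs_of_nonneg h, smul_eq_mul]
    · have : t • x = -((-t) • x) := by module
      rw [this, gauge_neg hs, gauge_smul_of_nonneg (by linarith), abs_of_nonpos h, smul_eq_mul]
  · intro x
    have := le_gauge_of_subset_closedBall habs hr.le hKr (x := x)
    rw [div_le_iff₀ hr] at this
    linarith
  · intro x; exact (gauge_lt_one_iff_mem_interior hKconv hn).symm
  · intro x; exact (gauge_eq_one_iff_mem_frontier hKconv hn).symm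

/-- Let `K ⊆ ℝ²` be a centrally symmetric convex body and `Λ` a `K`-critical lattice.
Then three pairs of lattice points `±p₁, ±p₂, ±p₃` lie on `∂K`, which can be chosen so
that `p₁ + p₂ = p₃` and any two of `p₁, p₂, p₃` form a basis of `Λ`.  Conversely, for any
points `p₁, p₂, p₃ ∈ ∂K` with `p₁ + p₂ = p₃`, the lattice generated by `p₁, p₂` is
`K`-admissible. -/
theorem critical_lattice_structure (K : Set (Fin 2 → ℝ))
    (hKc : IsCompact K) (hKconv : Convex ℝ K) (hKint : (interior K).Nonempty)
    (hsymm : K = -K)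
    (A : Matrix (Fin 2) (Fin 2) ℝ) (hA : A.det ≠ 0)
    (hadm : Admissible (latticeOf A) K) (hcrit : |A.det| = critDet K) :
    (∃ p₁ p₂ p₃ : Fin 2 → ℝ,
      (p₁ ∈ latticeOf A ∧ p₁ ∈ frontier K ∧ -p₁ ∈ latticeOf A ∧ -p₁ ∈ frontier K) ∧
      (p₂ ∈ latticeOf A ∧ p₂ ∈ frontier K ∧ -p₂ ∈ latticeOf A ∧ -p₂ ∈ frontier K) ∧
      (p₃ ∈ latticeOf A ∧ p₃ ∈ frontier K ∧ -p₃ ∈ latticeOf A ∧ -p₃ ∈ frontier K) ∧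
      p₁ + p₂ = p₃ ∧
      IsLatticeBasis p₁ p₂ (latticeOf A) ∧ IsLatticeBasis p₁ p₃ (latticeOf A) ∧
      IsLatticeBasis p₂ p₃ (latticeOf A)) ∧
    (∀ p₁ p₂ p₃ : Fin 2 → ℝ, p₁ ∈ frontier K → p₂ ∈ frontier K → p₃ ∈ frontier K →
      p₁ + p₂ = p₃ →
      Admissible (Set.range fun mn : ℤ × ℤ => (mn.1 : ℝ) • p₁ + (mn.2 : ℝ) • p₂) K) := by
  obtain ⟨g, R, hadd, hsm, hg0, hR, hint, hfr⟩ := exists_gauge K hKc hKconv hKint hsymm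
  have hzero : g 0 = 0 := by simpa using hsm 0 0
  have hneg := seminorm_neg hsm
  have hreduced : ∀ a b, g a = 1 → g b = 1 → 1 ≤ g (b + a) → 1 ≤ g (b - a) →
      Admissible (Set.range fun mn : ℤ × ℤ => (mn.1 : ℝ) • a + (mn.2 : ℝ) • b) K := by
    intro a b ha hb hp hm
    unfold Admissible
    ext x
    simp only [Set.mem_inter_iff, Set.mem_range, Set.mem_singleton_iff]
    constructor
    · rintro ⟨⟨⟨m, n⟩, rfl⟩, hx⟩
      by_contra hne
      have h1 := reduced_unit hadd hsm a b ha hb hp hm m n (by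
        rintro h
        simp only [Prod.mk.injEq] at h
        apply hne
        simp [h.1, h.2])
      have h2 := (hint _).1 hx
      simp only at h2
      linarith
    · rintro rfl
      exact ⟨⟨(0, 0), by simp⟩, (hint 0).2 (by rw [hzero]; norm_num)⟩
  refine ⟨?_, ?_⟩
  · have hbas := latticeOf_basis A
    have hDA : D2 (fun i => A i 0) (fun i => A i 1) = A.det := by
      rw [Matrix.det_fin_two]; simp only [D2]; ring
    obtain ⟨u, v, hB, hDuv, huv, hp, hm⟩ :=
      exists_reduced R hR hg0 _ _ (by rw [hDA]; exact hA) _ hbas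
    rw [hDA] at hDuv
    have hD : D2 u v ≠ 0 := by
      rw [← abs_pos, hDuv]; exact abs_pos.2 hA
    have hu1 : 1 ≤ g u := by
      by_contra hlt
      push Not at hlt
      have hmem : u ∈ latticeOf A ∩ interior K := by
        refine ⟨?_, (hint u).2 hlt⟩
        rw [hB]; exact ⟨(1, 0), by simp⟩
      rw [hadm] at hmem
      rw [Set.mem_singleton_iff] at hmem
      apply hD
      simp [D2, hmem]
    have hc : ∀ a b, D2 a b ≠ 0 → g a = 1 → g b = 1 → 1 ≤ g (b + a) → 1 ≤ g (b - a) →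
        |D2 u v| ≤ |D2 a b| := by
      intro a b hab ha hb h1 h2
      rw [hDuv, hcrit]
      unfold critDet
      apply csInf_le
      · refine ⟨0, ?_⟩
        rintro d ⟨B, -, -, rfl⟩
        exact abs_nonneg _
      · let B : Matrix (Fin 2) (Fin 2) ℝ := Matrix.of fun i j => ![a, b] j i
        have hdet : B.det = D2 a b := by
          rw [Matrix.det_fin_two]; simp [B, D2]; ring
        refine ⟨B, by rwa [hdet], ?_, by rw [hdet]⟩
        have hBb : latticeOf B = _ := latticeOf_basis B
        rw [hBb]
        exact hreduced a b ha hb h1 h2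
    obtain ⟨hu, hv, hor⟩ := perturb hadd hsm u v hD hu1 huv hp hm hc
    have finish : ∀ w : Fin 2 → ℝ, IsLatticeBasis u w (latticeOf A) → g w = 1 → g (u + w) = 1 →
        ∃ p₁ p₂ p₃ : Fin 2 → ℝ,
      (p₁ ∈ latticeOf A ∧ p₁ ∈ frontier K ∧ -p₁ ∈ latticeOf A ∧ -p₁ ∈ frontier K) ∧
      (p₂ ∈ latticeOf A ∧ p₂ ∈ frontier K ∧ -p₂ ∈ latticeOf A ∧ -p₂ ∈ frontier K) ∧
      (p₃ ∈ latticeOf A ∧ p₃ ∈ frontier K ∧ -p₃ ∈ latticeOf A ∧ -p₃ ∈ frontier K) ∧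
      p₁ + p₂ = p₃ ∧
      IsLatticeBasis p₁ p₂ (latticeOf A) ∧ IsLatticeBasis p₁ p₃ (latticeOf A) ∧
      IsLatticeBasis p₂ p₃ (latticeOf A) := by
      intro w hw hw1 huw
      have mem : ∀ m n : ℤ, (m : ℝ) • u + (n : ℝ) • w ∈ latticeOf A := by
        intro m n; rw [hw]; exact ⟨(m, n), rfl⟩
      refine ⟨u, w, u + w, ⟨?_, (hfr _).2 hu, ?_, (hfr _).2 (by rw [hneg, hu])⟩,
        ⟨?_, (hfr _).2 hw1, ?_, (hfr _).2 (by rw [hneg, hw1])⟩,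
        ⟨?_, (hfr _).2 huw, ?_, (hfr _).2 (by rw [hneg, huw])⟩, rfl, hw, ?_, ?_⟩
      · simpa using mem 1 0
      · simpa using mem (-1) 0
      · simpa using mem 0 1
      · simpa using mem 0 (-1)
      · simpa using mem 1 1
      · have := mem (-1) (-1)
        have e : -(u + w) = ((-1 : ℤ) : ℝ) • u + ((-1 : ℤ) : ℝ) • w := by push_cast; module
        rw [e]; exact this
      · simpa using basis_change hw 1 0 1 1 (by norm_num)
      · simpa using basis_change hw 0 1 1 1 (by norm_num)
    rcases hor with h | h
    · exact finish v hB hv (by rwa [add_comm])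
    · refine finish (-v) ?_ (by rw [hneg, hv]) ?_
      · simpa using basis_change hB 1 0 0 (-1) (by norm_num)
      · rw [← hneg]
        have e : -(u + -v) = v - u := by abel
        rw [e, h]
  · intro p₁ p₂ p₃ h1 h2 h3 h
    rw [hfr] at h1 h2 h3
    apply hreduced p₁ p₂ h1 h2
    · rw [add_comm, h, h3]
    · have h4 := seminorm_sub hadd hsm ((2 : ℝ) • p₂) (-p₃)
      have e : (2 : ℝ) • p₂ + -p₃ = p₂ - p₁ := by rw [← h]; module
      rw [e, hneg, hsm, h2, h3, abs_of_pos (by norm_num)] at h4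
      linarith
end
end

section
/- Let C be a centrally symmetric convex body in ℝ³ and let h be a unit vector. Then the critical determinant of C satisfies Δ(C) ≤ Δ(C ∩ h^⊥) · max_{x∈C} ⟨x, h⟩, where C ∩ h^⊥ is the central planar section of C by the plane through the origin orthogonal to h and Δ(C ∩ h^⊥) is its two-dimensional critical determinant computed inside the plane h^⊥. -/
open MeasureTheory Set Matrix Pointwise

noncomputable section

/-- The two-dimensional critical determinant of a planar section `C ∩ h^⊥`, computed
inside the plane `h^⊥`: the infimum of areas of fundamental parallelograms (given by the
Euclidean norm of the cross product of the generators) of planar lattices in `h^⊥`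
meeting the relative interior of `C ∩ h^⊥` only in `0`. -/
def planarCritDet (C : Set (Fin 3 → ℝ)) (h : Fin 3 → ℝ) : ℝ :=
  sInf {d : ℝ | ∃ v₁ v₂ : Fin 3 → ℝ, v₁ ⬝ᵥ h = 0 ∧ v₂ ⬝ᵥ h = 0 ∧
    crossProduct v₁ v₂ ≠ 0 ∧
    (Set.range fun mn : ℤ × ℤ => (mn.1 : ℝ) • v₁ + (mn.2 : ℝ) • v₂) ∩
      intrinsicInterior ℝ (C ∩ {x | x ⬝ᵥ h = 0}) = {0} ∧
    d = Real.sqrt (crossProduct v₁ v₂ ⬝ᵥ crossProduct v₁ v₂)}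

lemma zero_mem_interior_aux (C : Set (Fin 3 → ℝ)) (hCconv : Convex ℝ C)
    (hCint : (interior C).Nonempty) (hsymm : C = -C) : (0 : Fin 3 → ℝ) ∈ interior C := by
  obtain ⟨x, hx⟩ := hCint
  have hx' : -x ∈ interior C := by
    have h1 : interior (-C) = -interior C := by
      have := (Homeomorph.neg (Fin 3 → ℝ)).preimage_interior C
      exact this.symm
    rw [hsymm, h1]
    simpa using hx
  have := hCconv.interior hx hx' (a := 1/2) (b := 1/2) (by norm_num) (by norm_num) (by norm_num)
  simpa using this

lemma mem_intrinsic_aux (C : Set (Fin 3 → ℝ)) (h x : Fin 3 → ℝ) (hx : x ∈ interior C)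
    (hxh : x ⬝ᵥ h = 0) : x ∈ intrinsicInterior ℝ (C ∩ {x | x ⬝ᵥ h = 0}) := by
  let P : Submodule ℝ (Fin 3 → ℝ) :=
    { carrier := {x | x ⬝ᵥ h = 0}
      add_mem' := by
        intro a b ha hb
        simp only [Set.mem_ofPred_eq] at *
        rw [add_dotProduct, ha, hb, add_zero]
      zero_mem' := by simp
      smul_mem' := by
        intro c a ha
        simp only [Set.mem_ofPred_eq] at *
        rw [smul_dotProduct, ha, smul_zero] }
  have hP : affineSpan ℝ (C ∩ {x | x ⬝ᵥ h = 0}) ≤ P.toAffineSubspace := by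
    apply affineSpan_le.2
    intro y hy
    exact hy.2
  rw [mem_intrinsicInterior]
  refine ⟨⟨x, subset_affineSpan ℝ _ ⟨interior_subset hx, hxh⟩⟩, ?_, rfl⟩
  rw [mem_interior]
  refine ⟨(fun y : affineSpan ℝ (C ∩ {x | x ⬝ᵥ h = 0}) => (y : Fin 3 → ℝ)) ⁻¹' interior C, ?_,
    isOpen_interior.preimage continuous_subtype_val, hx⟩
  intro y hy
  exact ⟨interior_subset hy, hP y.2⟩

lemma interior_lt_aux (C : Set (Fin 3 → ℝ)) (hCc : IsCompact C) (h x : Fin 3 → ℝ)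
    (hh : h ⬝ᵥ h = 1) (hx : x ∈ interior C) :
    x ⬝ᵥ h < sSup {r : ℝ | ∃ x ∈ C, r = x ⬝ᵥ h} := by
  have hset : {r : ℝ | ∃ x ∈ C, r = x ⬝ᵥ h} = (fun x => x ⬝ᵥ h) '' C := by
    ext r; simp [eq_comm]
  have hcont : Continuous fun x : Fin 3 → ℝ => x ⬝ᵥ h := by
    unfold dotProduct; fun_prop
  have hbdd : BddAbove {r : ℝ | ∃ x ∈ C, r = x ⬝ᵥ h} := by
    rw [hset]; exact (hCc.image hcont).bddAbove
  have hc2 : Filter.Tendsto (fun t : ℝ => x + t • h) (nhdsWithin 0 (Set.Ioi 0)) (nhds x) := by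
    have : Continuous fun t : ℝ => x + t • h := by fun_prop
    have := this.tendsto 0
    simp only [zero_smul, add_zero] at this
    exact this.mono_left nhdsWithin_le_nhds
  have hev := hc2.eventually (isOpen_interior.mem_nhds hx)
  obtain ⟨t, ht, ht0⟩ := (hev.and self_mem_nhdsWithin).exists
  have := le_csSup hbdd ⟨_, interior_subset ht, rfl⟩
  rw [add_dotProduct, smul_dotProduct, hh] at this
  have ht0' : 0 < t := ht0
  simp only [smul_eq_mul, mul_one] at this
  linarith

lemma nonempty_aux (C : Set (Fin 3 → ℝ)) (hCc : IsCompact C) (h0 : (0 : Fin 3 → ℝ) ∈ interior C)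
    (h : Fin 3 → ℝ) (hh : h ⬝ᵥ h = 1) :
    ∃ v₁ v₂ : Fin 3 → ℝ, v₁ ⬝ᵥ h = 0 ∧ v₂ ⬝ᵥ h = 0 ∧
    crossProduct v₁ v₂ ≠ 0 ∧
    (Set.range fun mn : ℤ × ℤ => (mn.1 : ℝ) • v₁ + (mn.2 : ℝ) • v₂) ∩
      intrinsicInterior ℝ (C ∩ {x | x ⬝ᵥ h = 0}) = {0} := by
  have hcont : Continuous fun x : Fin 3 → ℝ => x ⬝ᵥ x := by
    unfold dotProduct; fun_prop
  obtain ⟨B, hB⟩ := (hCc.image hcont).bddAbove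
  have hB' : ∀ x ∈ C, x ⬝ᵥ x ≤ B := fun x hx => hB ⟨x, hx, rfl⟩
  have hB0 : 0 ≤ B := by simpa using hB' 0 (interior_subset h0)
  have hu : ∃ u : Fin 3 → ℝ, u ⬝ᵥ h = 0 ∧ 0 < u ⬝ᵥ u := by
    by_cases h1 : h 0 = 0 ∧ h 1 = 0
    · refine ⟨![1, 0, 0], ?_, ?_⟩ <;> simp [dotProduct, Fin.sum_univ_three, h1.1]
    · refine ⟨![-h 1, h 0, 0], ?_, ?_⟩
      · simp [dotProduct, Fin.sum_univ_three]; ring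
      · simp [dotProduct, Fin.sum_univ_three]
        by_cases h2 : h 0 = 0
        · have h4 : h 1 ≠ 0 := fun h3 => h1 ⟨h2, h3⟩
          nlinarith [mul_self_pos.2 h4, mul_self_nonneg (h 0)]
        · nlinarith [mul_self_pos.2 h2, mul_self_nonneg (h 1)]
  obtain ⟨u, hu1, hu2⟩ := hu
  obtain ⟨v, hv1, hv2⟩ : ∃ v : Fin 3 → ℝ, v ⬝ᵥ h = 0 ∧ B < v ⬝ᵥ v := by
    refine ⟨((B + 1) / (u ⬝ᵥ u) + 1) • u, ?_, ?_⟩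
    · rw [smul_dotProduct, hu1, smul_zero]
    · rw [smul_dotProduct, dotProduct_smul]
      simp only [smul_eq_mul]
      have h3 : 0 ≤ (B + 1) / (u ⬝ᵥ u) := by positivity
      have h4 : (B + 1) / (u ⬝ᵥ u) * (u ⬝ᵥ u) = B + 1 := by field_simp
      nlinarith [mul_nonneg h3 hu2.le, mul_nonneg (mul_nonneg h3 hu2.le) h3]
  have e1 : crossProduct v (crossProduct h v) = (v ⬝ᵥ v) • h := by
    ext i
    fin_cases i <;> simp [cross_apply, dotProduct, Fin.sum_univ_three] at hv1 ⊢
    · linear_combination -(v 0) * hv1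
    · linear_combination -(v 1) * hv1
    · linear_combination -(v 2) * hv1
  have e2 : ∀ a b : ℝ, (a • v + b • crossProduct h v) ⬝ᵥ (a • v + b • crossProduct h v)
      = (a ^ 2 + b ^ 2) * (v ⬝ᵥ v) := by
    intro a b
    simp [cross_apply, dotProduct, Fin.sum_univ_three] at hv1 hh ⊢
    linear_combination b ^ 2 * (v 0 * v 0 + v 1 * v 1 + v 2 * v 2) * hh
      - b ^ 2 * (v 0 * h 0 + v 1 * h 1 + v 2 * h 2) * hv1
  have hvpos : 0 < v ⬝ᵥ v := by linarith
  refine ⟨v, crossProduct h v, hv1, ?_, ?_, ?_⟩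
  · rw [dotProduct_comm, dot_self_cross]
  · rw [e1]
    intro h3
    have h4 : ((v ⬝ᵥ v) • h) ⬝ᵥ h = 0 := by rw [h3, zero_dotProduct]
    rw [smul_dotProduct, hh] at h4
    simp only [smul_eq_mul, mul_one] at h4
    linarith
  · apply Set.Subset.antisymm
    · rintro x ⟨⟨⟨m, n⟩, rfl⟩, hx⟩
      have h5 := hB' _ (intrinsicInterior_subset hx).1
      simp only at h5
      rw [e2] at h5
      have h6 : (m : ℝ) ^ 2 + (n : ℝ) ^ 2 < 1 := by
        by_contra hcon
        push Not at hcon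
        nlinarith
      have h7 : m ^ 2 + n ^ 2 < 1 := by exact_mod_cast h6
      have hm : m = 0 := by nlinarith [sq_nonneg m, sq_nonneg n, pow_eq_zero_iff (two_ne_zero) (a := m)]
      have hn : n = 0 := by nlinarith [sq_nonneg m, sq_nonneg n, pow_eq_zero_iff (two_ne_zero) (a := n)]
      simp [hm, hn]
    · rintro x rfl
      exact ⟨⟨(0, 0), by simp⟩, mem_intrinsic_aux C h 0 h0 (by simp)⟩

lemma le_aux (C : Set (Fin 3 → ℝ))
    (hCc : IsCompact C) (hCconv : Convex ℝ C) (hCint : (interior C).Nonempty)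
    (hsymm : C = -C) (h : Fin 3 → ℝ) (hh : h ⬝ᵥ h = 1) (v₁ v₂ : Fin 3 → ℝ)
    (h1 : v₁ ⬝ᵥ h = 0) (h2 : v₂ ⬝ᵥ h = 0) (hc : crossProduct v₁ v₂ ≠ 0)
    (hadm : (Set.range fun mn : ℤ × ℤ => (mn.1 : ℝ) • v₁ + (mn.2 : ℝ) • v₂) ∩
      intrinsicInterior ℝ (C ∩ {x | x ⬝ᵥ h = 0}) = {0}) :
    critDet C ≤ Real.sqrt (crossProduct v₁ v₂ ⬝ᵥ crossProduct v₁ v₂) *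
      sSup {r : ℝ | ∃ x ∈ C, r = x ⬝ᵥ h} := by
  have h0 := zero_mem_interior_aux C hCconv hCint hsymm
  have hlt := fun x => interior_lt_aux C hCc h x hh
  set M := sSup {r : ℝ | ∃ x ∈ C, r = x ⬝ᵥ h} with hM
  have hM0 : 0 < M := by simpa using hlt 0 h0
  have hneg : ∀ x ∈ interior C, -x ∈ interior C := by
    intro x hx
    have h3 : interior (-C) = -interior C :=
      ((Homeomorph.neg (Fin 3 → ℝ)).preimage_interior C).symm
    rw [hsymm, h3]
    simpa using hx
  have hsq : (crossProduct v₁ v₂ ⬝ᵥ h) ^ 2 = crossProduct v₁ v₂ ⬝ᵥ crossProduct v₁ v₂ := by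
    have k0 : crossProduct (crossProduct v₁ v₂) h = 0 := by
      ext i
      fin_cases i <;> simp [cross_apply, dotProduct, Fin.sum_univ_three] at h1 h2 ⊢
      · linear_combination v₂ 0 * h1 - v₁ 0 * h2
      · linear_combination v₂ 1 * h1 - v₁ 1 * h2
      · linear_combination v₂ 2 * h1 - v₁ 2 * h2
    have k1 := cross_dot_cross (crossProduct v₁ v₂) h (crossProduct v₁ v₂) h
    rw [k0, zero_dotProduct, hh, dotProduct_comm h] at k1
    linear_combination k1
  have hpos : 0 < crossProduct v₁ v₂ ⬝ᵥ crossProduct v₁ v₂ := by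
    have := dotProduct_self_eq_zero (v := crossProduct v₁ v₂)
    rcases (hsq ▸ sq_nonneg _ : 0 ≤ crossProduct v₁ v₂ ⬝ᵥ crossProduct v₁ v₂).lt_or_eq with k | k
    · exact k
    · exact absurd (this.1 k.symm) hc
  let A : Matrix (Fin 3) (Fin 3) ℝ := (Matrix.of ![v₁, v₂, M • h])ᵀ
  have hdet : A.det = (crossProduct v₁ v₂ ⬝ᵥ h) * M := by
    rw [Matrix.det_transpose, Matrix.det_fin_three]
    simp [cross_apply, dotProduct, Fin.sum_univ_three]
    ring
  have habs : |A.det| = Real.sqrt (crossProduct v₁ v₂ ⬝ᵥ crossProduct v₁ v₂) * M := by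
    rw [hdet, abs_mul, abs_of_pos hM0, ← hsq, Real.sqrt_sq_eq_abs]
  have hmul : ∀ m : Fin 3 → ℤ, (A.mulVec fun i => (m i : ℝ)) =
      (m 0 : ℝ) • v₁ + (m 1 : ℝ) • v₂ + ((m 2 : ℝ) * M) • h := by
    intro m
    ext i
    simp [A, Matrix.mulVec, dotProduct, Fin.sum_univ_three]
    ring
  have hdot : ∀ m : Fin 3 → ℤ, (A.mulVec fun i => (m i : ℝ)) ⬝ᵥ h = (m 2 : ℝ) * M := by
    intro m
    rw [hmul, add_dotProduct, add_dotProduct, smul_dotProduct, smul_dotProduct, smul_dotProduct,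
      h1, h2, hh]
    simp
  apply csInf_le
  · refine ⟨0, ?_⟩
    rintro d ⟨A, -, -, rfl⟩
    exact abs_nonneg _
  · refine ⟨A, ?_, ?_, habs.symm⟩
    · rw [← abs_pos, habs]
      exact mul_pos (Real.sqrt_pos.2 hpos) hM0
    · apply Set.Subset.antisymm
      · rintro x ⟨⟨m, rfl⟩, hx⟩
        simp only at hx ⊢
        have a1 := hlt _ hx
        have a2 := hlt _ (hneg _ hx)
        rw [neg_dotProduct] at a2
        rw [hdot] at a1 a2
        have b1 : (m 2 : ℝ) < 1 := by nlinarith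
        have b2 : (-1 : ℝ) < m 2 := by nlinarith
        have c1 : m 2 < 1 := by exact_mod_cast b1
        have c2 : -1 < m 2 := by exact_mod_cast b2
        have c : m 2 = 0 := by omega
        have hd := hdot m
        have hm := hmul m
        simp only [c, Int.cast_zero, zero_mul, zero_smul, add_zero] at hd hm
        rw [← hadm]
        exact ⟨⟨(m 0, m 1), hm.symm⟩, mem_intrinsic_aux C h _ hx hd⟩
      · rintro x rfl
        exact ⟨⟨0, (hmul 0).trans (by simp)⟩, h0⟩

/-- For a centrally symmetric convex body `C ⊆ ℝ³` and a unit vector `h`: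
`Δ(C) ≤ Δ(C ∩ h^⊥) · max_{x ∈ C} ⟨x, h⟩`. -/
theorem critDet_le_planar_section (C : Set (Fin 3 → ℝ))
    (hCc : IsCompact C) (hCconv : Convex ℝ C) (hCint : (interior C).Nonempty)
    (hsymm : C = -C) (h : Fin 3 → ℝ) (hh : h ⬝ᵥ h = 1) :
    critDet C ≤ planarCritDet C h * sSup {r : ℝ | ∃ x ∈ C, r = x ⬝ᵥ h} := by
  have h0 := zero_mem_interior_aux C hCconv hCint hsymm
  have hM0 : 0 < sSup {r : ℝ | ∃ x ∈ C, r = x ⬝ᵥ h} := by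
    simpa using interior_lt_aux C hCc h 0 hh h0
  rw [← div_le_iff₀ hM0]
  apply le_csInf
  · obtain ⟨v₁, v₂, a, b, c, d⟩ := nonempty_aux C hCc h0 h hh
    exact ⟨_, v₁, v₂, a, b, c, d, rfl⟩
  · rintro d ⟨v₁, v₂, a, b, c, e, rfl⟩
    rw [div_le_iff₀ hM0]
    exact le_aux C hCc hCconv hCint hsymm h hh v₁ v₂ a b c e
end
end

section
/- For the triangle T = conv{(0,0), (1,1/2), (1/2,1)} in ℝ², one has d_{2,1}(T) = 3/8 and ℤ² is a *critical lattice for T, i.e., ℤ² + T is non-separable and d(ℤ²) = Δ*(T). -/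
open MeasureTheory Set Matrix Pointwise

noncomputable section

/-- The *critical determinant `Δ*(K)`: the largest determinant of a lattice `Λ`
with `Λ + K` non-separable. -/
def starCritDet {n : ℕ} (K : Set (Fin n → ℝ)) : ℝ :=
  sSup {d : ℝ | ∃ A : Matrix (Fin n) (Fin n) ℝ, A.det ≠ 0 ∧
    NonSeparable (latticeOf A) K ∧ d = |A.det|}

/-- the triangle -/
def triT : Set (Fin 2 → ℝ) := convexHull ℝ ({![0, 0], ![1, 1/2], ![1/2, 1]} : Set (Fin 2 → ℝ))

lemma triT_v0 : (![0, 0] : Fin 2 → ℝ) ∈ triT := subset_convexHull ℝ _ (by simp)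
lemma triT_v1 : (![1, 1/2] : Fin 2 → ℝ) ∈ triT := subset_convexHull ℝ _ (by simp)
lemma triT_v2 : (![1/2, 1] : Fin 2 → ℝ) ∈ triT := subset_convexHull ℝ _ (by simp)

lemma triT_eq : triT = {v : Fin 2 → ℝ | v 0 / 2 ≤ v 1 ∧ v 1 ≤ 2 * v 0 ∧ v 0 + v 1 ≤ 3 / 2} := by
  apply Set.Subset.antisymm
  · apply convexHull_min
    · intro v hv
      simp only [Set.mem_insert_iff, Set.mem_singleton_iff] at hv
      rcases hv with rfl | rfl | rfl <;> norm_num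
    · intro x hx y hy a b ha hb hab
      simp only [Set.mem_ofPred_eq, Pi.add_apply, Pi.smul_apply, smul_eq_mul] at *
      obtain ⟨h1, h2, h3⟩ := hx
      obtain ⟨h4, h5, h6⟩ := hy
      refine ⟨?_, ?_, ?_⟩ <;>
      nlinarith [mul_le_mul_of_nonneg_left h1 ha, mul_le_mul_of_nonneg_left h2 ha,
        mul_le_mul_of_nonneg_left h3 ha, mul_le_mul_of_nonneg_left h4 hb,
        mul_le_mul_of_nonneg_left h5 hb, mul_le_mul_of_nonneg_left h6 hb]
  · rintro v ⟨h1, h2, h3⟩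
    have hc : Convex ℝ triT := convex_convexHull ℝ _
    have key := hc.sum_mem (t := (Finset.univ : Finset (Fin 3)))
      (w := ![1 - (2/3) * (v 0 + v 1), (4 * v 0 - 2 * v 1) / 3, (4 * v 1 - 2 * v 0) / 3])
      (z := ![![0, 0], ![1, 1/2], ![1/2, 1]]) ?_ ?_ ?_
    · convert key using 1
      ext i
      fin_cases i <;> simp [Fin.sum_univ_three] <;> ring
    · intro i _
      fin_cases i <;> simp <;> linarith
    · simp [Fin.sum_univ_three]; ring
    · intro i _
      fin_cases i
      · exact triT_v0
      · exact triT_v1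
      · exact triT_v2

lemma exists_int_step (r x : ℝ) (hr : r ≠ 0) (h1 : |r| ≤ 1) : ∃ n : ℤ, 0 ≤ x - n * r ∧ x - n * r ≤ 1 := by
  have hp : 0 < |r| := abs_pos.mpr hr
  have e1 := Int.floor_le (x / |r|)
  have e2 := Int.lt_floor_add_one (x / |r|)
  rw [le_div_iff₀ hp] at e1
  rw [div_lt_iff₀ hp] at e2
  rcases abs_cases r with ⟨h, _⟩ | ⟨h, _⟩
  · refine ⟨⌊x / |r|⌋, ?_, ?_⟩ <;> generalize ⌊x / |r|⌋ = k at * <;> rw [h] at e1 e2 h1 <;> nlinarith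
  · refine ⟨-⌊x / |r|⌋, ?_, ?_⟩ <;> push_cast <;> generalize ⌊x / |r|⌋ = k at * <;>
      rw [h] at e1 e2 h1 <;> nlinarith

lemma step_cover (u v1 v2 : Fin 2 → ℝ) (z : Fin 2 → ℤ) (hv1 : v1 ∈ triT) (hv2 : v2 ∈ triT)
    (s : ℝ) (hs : s = u 0 * z 0 + u 1 * z 1) (hs0 : s ≠ 0)
    (h : |s| ≤ |u ⬝ᵥ (v2 - v1)|) (c : ℝ) :
    ∃ x ∈ intLattice 2, ∃ y ∈ triT, u ⬝ᵥ (x + y) = c := by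
  set d := u ⬝ᵥ (v2 - v1) with hd
  have hd0 : d ≠ 0 := by
    intro h0
    rw [h0, abs_zero] at h
    exact hs0 (abs_nonpos_iff.mp h)
  obtain ⟨n, hn1, hn2⟩ := exists_int_step (s / d) ((c - u ⬝ᵥ v1) / d) (div_ne_zero hs0 hd0)
    (by rw [abs_div, div_le_one (abs_pos.mpr hd0)]; exact h)
  set t := (c - u ⬝ᵥ v1) / d - n * (s / d) with ht
  refine ⟨_, ⟨fun i => n * z i, rfl⟩, (1 - t) • v1 + t • v2,
    (convex_convexHull ℝ _) hv1 hv2 (by linarith) hn1 (by ring), ?_⟩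
  have htd : t * d = c - u ⬝ᵥ v1 - n * s := by
    rw [ht]; field_simp
  simp only [dotProduct, Fin.sum_univ_two, Pi.add_apply, Pi.sub_apply, Pi.smul_apply,
    smul_eq_mul] at htd hd ⊢
  push_cast
  rw [hd, hs] at htd
  linarith

lemma int_nonsep : NonSeparable (intLattice 2) triT := by
  intro u hu c
  have hab : u 0 ≠ 0 ∨ u 1 ≠ 0 := by
    by_contra hh
    push Not at hh
    exact hu (by ext i; fin_cases i <;> simp [hh.1, hh.2])
  have key : (u 0 ≠ 0 ∧ |u 0| ≤ |u 0 + u 1 / 2|) ∨ (u 1 ≠ 0 ∧ |u 1| ≤ |u 0 / 2 + u 1|) ∨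
      (u 0 ≠ 0 ∧ |u 0| ≤ |u 1 / 2 - u 0 / 2|) ∨ (u 1 ≠ 0 ∧ |u 1| ≤ |u 1 / 2 - u 0 / 2|) := by
    by_cases h0 : u 0 = 0
    · right; left
      rw [h0] at hab ⊢
      simpa using hab
    by_cases h1 : u 1 = 0
    · left
      rw [h1]
      simpa using h0
    simp only [h0, h1, ne_eq, not_false_eq_true, true_and]
    rcases lt_or_gt_of_ne h0 with h0 | h0 <;> rcases lt_or_gt_of_ne h1 with h1 | h1
    · left
      rw [abs_of_neg h0, abs_of_neg (by linarith)]; linarith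
    · right; right
      rw [abs_of_neg h0, abs_of_pos h1, abs_of_pos (by linarith)]
      rcases le_total (-u 0) (u 1) with h | h
      · left; linarith
      · right; linarith
    · right; right
      rw [abs_of_pos h0, abs_of_neg h1, abs_of_neg (by linarith)]
      rcases le_total (u 0) (-u 1) with h | h
      · left; linarith
      · right; linarith
    · left
      rw [abs_of_pos h0, abs_of_pos (by linarith)]; linarith
  rcases key with ⟨h0, h⟩ | ⟨h0, h⟩ | ⟨h0, h⟩ | ⟨h0, h⟩
  · refine step_cover u _ _ ![1, 0] triT_v0 triT_v1 (u 0) (by simp) h0 (h.trans (le_of_eq ?_)) c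
    congr 1; simp [dotProduct, Fin.sum_univ_two]; ring
  · refine step_cover u _ _ ![0, 1] triT_v0 triT_v2 (u 1) (by simp) h0 (h.trans (le_of_eq ?_)) c
    congr 1; simp [dotProduct, Fin.sum_univ_two]; ring
  · refine step_cover u _ _ ![1, 0] triT_v1 triT_v2 (u 0) (by simp) h0 (h.trans (le_of_eq ?_)) c
    congr 1; simp [dotProduct, Fin.sum_univ_two]; ring
  · refine step_cover u _ _ ![0, 1] triT_v1 triT_v2 (u 1) (by simp) h0 (h.trans (le_of_eq ?_)) c
    congr 1; simp [dotProduct, Fin.sum_univ_two]; ring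

/-- Area of a planar set through its vertical slices. -/
lemma volume_slices (S : Set (Fin 2 → ℝ)) (hS : MeasurableSet S) :
    volume S = ∫⁻ x : ℝ, volume {y : ℝ | ![x, y] ∈ S} := by
  have hp := (volume_preserving_finTwoArrow ℝ).symm
  rw [← hp.measure_preimage hS.nullMeasurableSet]
  rw [Measure.volume_eq_prod, Measure.prod_apply]
  · rfl
  · exact hp.measurable hS

lemma volume_triT : volume triT = ENNReal.ofReal (3 / 8) := by
  have hm : MeasurableSet triT := by
    have hset : triT = {v : Fin 2 → ℝ | v 0 / 2 ≤ v 1} ∩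
        ({v | v 1 ≤ 2 * v 0} ∩ {v | v 0 + v 1 ≤ 3 / 2}) := triT_eq
    rw [hset]
    refine (IsClosed.inter ?_ (IsClosed.inter ?_ ?_)).measurableSet
    · exact isClosed_le (by fun_prop) (by fun_prop)
    · exact isClosed_le (by fun_prop) (by fun_prop)
    · exact isClosed_le (by fun_prop) (by fun_prop)
  rw [volume_slices _ hm]
  have hs : ∀ x : ℝ, volume {y : ℝ | ![x, y] ∈ triT} =
      (Set.Icc (0:ℝ) 1).indicator (fun x => ENNReal.ofReal (min (3 * x / 2) (3 / 2 - 3 * x / 2))) x := by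
    intro x
    have : {y : ℝ | ![x, y] ∈ triT} = Set.Icc (x / 2) (min (2 * x) (3 / 2 - x)) := by
      ext y
      simp only [triT_eq, Set.mem_ofPred_eq, Set.mem_Icc, le_min_iff]
      simp only [Matrix.cons_val_zero, Matrix.cons_val_one]
      constructor
      · rintro ⟨a, b, c⟩; exact ⟨a, b, by linarith⟩
      · rintro ⟨a, b, c⟩; exact ⟨a, b, by linarith⟩
    rw [this, Real.volume_Icc]
    have e : min (2 * x) (3 / 2 - x) - x / 2 = min (3 * x / 2) (3 / 2 - 3 * x / 2) := by
      rw [← min_sub_sub_right]; congr 1 <;> ring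
    rw [e]
    by_cases hx : x ∈ Set.Icc (0:ℝ) 1
    · rw [Set.indicator_of_mem hx]
    · rw [Set.indicator_of_notMem hx, ENNReal.ofReal_eq_zero]
      simp only [Set.mem_Icc, not_and_or, not_le] at hx
      rcases hx with hx | hx
      · exact (min_le_left _ _).trans (by linarith)
      · exact (min_le_right _ _).trans (by linarith)
  simp_rw [hs]
  rw [lintegral_indicator measurableSet_Icc, ← ofReal_integral_eq_lintegral_ofReal]
  · congr 1
    rw [integral_Icc_eq_integral_Ioc, ← intervalIntegral.integral_of_le zero_le_one,
      ← intervalIntegral.integral_add_adjacent_intervals (b := 1/2)]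
    · have h1 : ∫ x in (0:ℝ)..(1/2), min (3 * x / 2) (3 / 2 - 3 * x / 2) = ∫ x in (0:ℝ)..(1/2), (3 / 2) * x := by
        apply intervalIntegral.integral_congr
        intro x hx
        rw [Set.uIcc_of_le (by norm_num)] at hx
        simp only
        rw [min_eq_left (by linarith [hx.2])]; ring
      have h2 : ∫ x in (1/2:ℝ)..1, min (3 * x / 2) (3 / 2 - 3 * x / 2) = ∫ x in (1/2:ℝ)..1, (3 / 2 - (3 / 2) * x) := by
        apply intervalIntegral.integral_congr
        intro x hx
        rw [Set.uIcc_of_le (by norm_num)] at hx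
        simp only
        rw [min_eq_right (by linarith [hx.1])]; ring
      rw [h1, h2, intervalIntegral.integral_sub (by simp) (Continuous.intervalIntegrable (by fun_prop) _ _)]
      have h3 : ∀ a b : ℝ, ∫ x in a..b, (3 / 2) * x = 3 / 2 * ((b ^ 2 - a ^ 2) / 2) := by
        intro a b
        rw [intervalIntegral.integral_const_mul, integral_id]
      rw [h3, h3, intervalIntegral.integral_const]
      norm_num
    · exact Continuous.intervalIntegrable (by fun_prop) _ _
    · exact Continuous.intervalIntegrable (by fun_prop) _ _
  · exact (Continuous.integrableOn_Icc (by fun_prop))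
  · filter_upwards [ae_restrict_mem measurableSet_Icc] with x hx
    simp only [Pi.zero_apply]
    exact le_min (by linarith [hx.1]) (by linarith [hx.2])

/-- The open hexagon. -/
def hexH : Set (Fin 2 → ℝ) := {v | |v 0| < 1 ∧ |v 1| < 1 ∧ |v 0 - v 1| < 1}

lemma volume_hexH : volume hexH = ENNReal.ofReal 3 := by
  have hm : MeasurableSet hexH := by
    have hset : hexH = {v : Fin 2 → ℝ | |v 0| < 1} ∩
        ({v | |v 1| < 1} ∩ {v | |v 0 - v 1| < 1}) := rfl
    rw [hset]
    refine (IsOpen.inter ?_ (IsOpen.inter ?_ ?_)).measurableSet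
    · exact isOpen_lt (by fun_prop) (by fun_prop)
    · exact isOpen_lt (by fun_prop) (by fun_prop)
    · exact isOpen_lt (by fun_prop) (by fun_prop)
  rw [volume_slices _ hm]
  have hs : ∀ x : ℝ, volume {y : ℝ | ![x, y] ∈ hexH} =
      (Set.Ioo (-1:ℝ) 1).indicator (fun x => ENNReal.ofReal (2 - |x|)) x := by
    intro x
    by_cases hx : x ∈ Set.Ioo (-1:ℝ) 1
    · rw [Set.indicator_of_mem hx]
      have : {y : ℝ | ![x, y] ∈ hexH} = Set.Ioo (max (-1) (x - 1)) (min 1 (x + 1)) := by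
        ext y
        simp only [hexH, Set.mem_ofPred_eq, Set.mem_Ioo, lt_min_iff, max_lt_iff]
        simp only [Matrix.cons_val_zero, Matrix.cons_val_one, abs_lt]
        constructor
        · rintro ⟨a, b, c⟩; exact ⟨⟨b.1, by linarith⟩, b.2, by linarith⟩
        · rintro ⟨⟨a, b⟩, c, d⟩; exact ⟨hx, ⟨a, c⟩, by linarith, by linarith⟩
      rw [this, Real.volume_Ioo]
      congr 1
      rcases le_total 0 x with h | h
      · rw [abs_of_nonneg h, max_eq_right (by linarith), min_eq_left (by linarith)]; ring
      · rw [abs_of_nonpos h, max_eq_left (by linarith), min_eq_right (by linarith)]; ring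
    · rw [Set.indicator_of_notMem hx]
      have : {y : ℝ | ![x, y] ∈ hexH} = ∅ := by
        ext y
        simp only [hexH, Set.mem_ofPred_eq, Set.mem_empty_iff_false, iff_false]
        rintro ⟨a, _⟩
        exact hx (abs_lt.mp a)
      rw [this, measure_empty]
  simp_rw [hs]
  rw [lintegral_indicator measurableSet_Ioo, ← ofReal_integral_eq_lintegral_ofReal]
  · congr 1
    rw [← integral_Ioc_eq_integral_Ioo, ← intervalIntegral.integral_of_le (by norm_num),
      ← intervalIntegral.integral_add_adjacent_intervals (b := 0)]
    · have h1 : ∫ x in (-1:ℝ)..0, (2 - |x|) = ∫ x in (-1:ℝ)..0, (2 + x) := by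
        apply intervalIntegral.integral_congr
        intro x hx
        rw [Set.uIcc_of_le (by norm_num)] at hx
        simp only
        rw [abs_of_nonpos hx.2]; ring
      have h2 : ∫ x in (0:ℝ)..1, (2 - |x|) = ∫ x in (0:ℝ)..1, (2 - x) := by
        apply intervalIntegral.integral_congr
        intro x hx
        rw [Set.uIcc_of_le (by norm_num)] at hx
        simp only
        rw [abs_of_nonneg hx.1]
      rw [h1, h2, intervalIntegral.integral_sub (by simp) (by simp),
        intervalIntegral.integral_add (by simp) (by simp)]
      simp only [integral_id, intervalIntegral.integral_const]
      norm_num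
    · exact Continuous.intervalIntegrable (by fun_prop) _ _
    · exact Continuous.intervalIntegrable (by fun_prop) _ _
  · exact (Continuous.integrableOn_Icc (by fun_prop)).mono_set Set.Ioo_subset_Icc_self
  · filter_upwards [ae_restrict_mem measurableSet_Ioo] with x hx
    have := abs_lt.mpr hx
    simp only [Pi.zero_apply]
    linarith

lemma hexH_symm {v : Fin 2 → ℝ} (h : v ∈ hexH) : -v ∈ hexH := by
  obtain ⟨a, b, c⟩ := h
  refine ⟨?_, ?_, ?_⟩
  · simpa using a
  · simpa using b
  · rw [abs_lt] at *
    simp only [Pi.neg_apply]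
    constructor <;> linarith

lemma hexH_convex : Convex ℝ hexH := by
  have : hexH = {v : Fin 2 → ℝ | |v 0| < 1} ∩ ({v | |v 1| < 1} ∩ {v | |v 0 - v 1| < 1}) := rfl
  have key : ∀ f : (Fin 2 → ℝ) →ₗ[ℝ] ℝ, Convex ℝ {v | |f v| < 1} := by
    intro f
    have h : {v | |f v| < 1} = f ⁻¹' (Set.Ioo (-1) 1) := by ext v; simp [abs_lt]
    rw [h]
    exact (convex_Ioo _ _).linear_preimage f
  rw [this]
  refine (key (LinearMap.proj 0 : (Fin 2 → ℝ) →ₗ[ℝ] ℝ)).inter ((key (LinearMap.proj 1 : (Fin 2 → ℝ) →ₗ[ℝ] ℝ)).inter ?_)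
  exact key ((LinearMap.proj 0 : (Fin 2 → ℝ) →ₗ[ℝ] ℝ) - LinearMap.proj 1)

/-- Minkowski's theorem for `ℤ²`. -/
lemma minkowski_int (S : Set (Fin 2 → ℝ)) (hsymm : ∀ x ∈ S, -x ∈ S) (hconv : Convex ℝ S)
    (hvol : 4 < volume S) : ∃ m : Fin 2 → ℤ, m ≠ 0 ∧ (fun i => (m i : ℝ)) ∈ S := by
  have fund := ZSpan.isAddFundamentalDomain' (Pi.basisFun ℝ (Fin 2)) (volume : Measure (Fin 2 → ℝ))
  have hv : volume (ZSpan.fundamentalDomain (Pi.basisFun ℝ (Fin 2))) = 1 := by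
    rw [ZSpan.fundamentalDomain_pi_basisFun, Real.volume_pi_Ico]
    simp
  haveI : Countable (Submodule.span ℤ (Set.range (Pi.basisFun ℝ (Fin 2)))).toAddSubgroup :=
    inferInstanceAs (Countable (Submodule.span ℤ (Set.range (Pi.basisFun ℝ (Fin 2)))))
  obtain ⟨x, hx0, hxS⟩ := exists_ne_zero_mem_lattice_of_measure_mul_two_pow_lt_measure
    (L := (Submodule.span ℤ (Set.range (Pi.basisFun ℝ (Fin 2)))).toAddSubgroup) fund hsymm hconv (by
      rw [hv]; simp; norm_num; exact hvol)
  have hx := (Pi.basisFun ℝ (Fin 2)).mem_span_iff_repr_mem ℤ (x : Fin 2 → ℝ) |>.mp x.2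
  choose m hm using hx
  have he : (fun i => (m i : ℝ)) = (x : Fin 2 → ℝ) := by
    ext i
    simpa using hm i
  refine ⟨m, ?_, he ▸ hxS⟩
  rintro rfl
  apply hx0
  ext i
  rw [← he]; simp

lemma det_le_one (A : Matrix (Fin 2) (Fin 2) ℝ) (hA : A.det ≠ 0)
    (hns : NonSeparable (latticeOf A) triT) : |A.det| ≤ 1 := by
  by_contra hgt
  push Not at hgt
  set E : Matrix (Fin 2) (Fin 2) ℝ := !![1, 1/2; 1/2, 1] with hE
  have hEd : E.det = 3 / 4 := by rw [hE, Matrix.det_fin_two_of]; norm_num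
  set L := Matrix.toLin' (E * (Aᵀ)⁻¹) with hL
  have hLd : LinearMap.det L = 3 / 4 * (A.det)⁻¹ := by
    rw [hL, LinearMap.det_toLin', Matrix.det_mul, hEd, Matrix.det_nonsing_inv, Matrix.det_transpose,
      Ring.inverse_eq_inv]
  have hLd0 : LinearMap.det L ≠ 0 := by rw [hLd]; positivity
  have hvol : 4 < volume (L ⁻¹' hexH) := by
    rw [Measure.addHaar_preimage_linearMap _ hLd0, volume_hexH, ← ENNReal.ofReal_mul (abs_nonneg _),
      hLd]
    have : |(3 / 4 * (A.det)⁻¹)⁻¹| * 3 = 4 * |A.det| := by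
      rw [mul_inv, inv_inv, abs_mul, abs_of_pos (by norm_num : (0:ℝ) < (3/4)⁻¹)]; ring
    rw [this, show (4 : ENNReal) = ENNReal.ofReal 4 by simp]
    exact (ENNReal.ofReal_lt_ofReal_iff (by positivity)).mpr (by linarith)
  obtain ⟨m, hm0, hmS⟩ := minkowski_int (L ⁻¹' hexH)
    (fun x hx => by simpa using hexH_symm hx) (hexH_convex.linear_preimage L) hvol
  set mr : Fin 2 → ℝ := fun i => (m i : ℝ) with hmr
  set u : Fin 2 → ℝ := (Aᵀ)⁻¹ *ᵥ mr with hu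
  have hAu : Aᵀ *ᵥ u = mr := by
    rw [hu, Matrix.mulVec_mulVec, Matrix.mul_nonsing_inv, Matrix.one_mulVec]
    rw [Matrix.det_transpose]; exact isUnit_iff_ne_zero.mpr hA
  have hu0 : u ≠ 0 := by
    intro h
    rw [h, Matrix.mulVec_zero] at hAu
    apply hm0
    ext i
    have := congrFun hAu i
    simp only [hmr, Pi.zero_apply] at this
    exact_mod_cast this.symm
  have hw : E *ᵥ u ∈ hexH := by
    have : L mr = E *ᵥ u := by rw [hL, Matrix.toLin'_apply, hu, Matrix.mulVec_mulVec]
    rw [← this]; exact hmS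
  have p0 : (E *ᵥ u) 0 = u 0 + u 1 / 2 := by
    simp [hE, Matrix.mulVec, dotProduct, Fin.sum_univ_two]; ring
  have p1 : (E *ᵥ u) 1 = u 0 / 2 + u 1 := by
    simp [hE, Matrix.mulVec, dotProduct, Fin.sum_univ_two]; ring
  obtain ⟨w1, w2, w3⟩ := hw
  rw [p0] at w1 w3
  rw [p1] at w2 w3
  set p := u 0 + u 1 / 2 with hp
  set q := u 0 / 2 + u 1 with hq
  set hi := max 0 (max p q) with hhi
  set lo := min 0 (min p q) with hlo
  have hwid : hi - lo < 1 := by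
    rw [abs_lt] at w1 w2 w3
    rcases max_cases p q with ⟨h1, h1'⟩ | ⟨h1, h1'⟩ <;> rcases min_cases p q with ⟨h2, h2'⟩ | ⟨h2, h2'⟩ <;>
    rcases max_cases 0 (max p q) with ⟨h3, h3'⟩ | ⟨h3, h3'⟩ <;>
    rcases min_cases 0 (min p q) with ⟨h4, h4'⟩ | ⟨h4, h4'⟩ <;>
    rw [hhi, hlo, h3, h4] <;> linarith
  have hT : ∀ y ∈ triT, lo ≤ u ⬝ᵥ y ∧ u ⬝ᵥ y ≤ hi := by
    have hsub : triT ⊆ {y | lo ≤ u ⬝ᵥ y} ∩ {y | u ⬝ᵥ y ≤ hi} := by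
      have hlin : IsLinearMap ℝ (fun y : Fin 2 → ℝ => u ⬝ᵥ y) :=
        ⟨fun x y => dotProduct_add _ _ _, fun c x => dotProduct_smul _ _ _⟩
      apply convexHull_min
      · intro v hv
        simp only [Set.mem_insert_iff, Set.mem_singleton_iff] at hv
        rcases hv with rfl | rfl | rfl
        · have : u ⬝ᵥ ![0, 0] = 0 := by simp [dotProduct, Fin.sum_univ_two]
          simp only [Set.mem_inter_iff, Set.mem_ofPred_eq, this]
          exact ⟨min_le_left _ _, le_max_left _ _⟩
        · have : u ⬝ᵥ ![1, 1/2] = p := by simp [dotProduct, Fin.sum_univ_two, hp]; ring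
          simp only [Set.mem_inter_iff, Set.mem_ofPred_eq, this]
          exact ⟨(min_le_right _ _).trans (min_le_left _ _),
            (le_max_left _ _).trans (le_max_right _ _)⟩
        · have : u ⬝ᵥ ![1/2, 1] = q := by simp [dotProduct, Fin.sum_univ_two, hq]; ring
          simp only [Set.mem_inter_iff, Set.mem_ofPred_eq, this]
          exact ⟨(min_le_right _ _).trans (min_le_right _ _),
            (le_max_right _ _).trans (le_max_right _ _)⟩
      · exact (convex_halfSpace_ge hlin _).inter (convex_halfSpace_le hlin _)
    exact fun y hy => hsub hy
  obtain ⟨x, ⟨k, rfl⟩, y, hy, hc⟩ := hns u hu0 ((hi + lo + 1) / 2)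
  obtain ⟨b1, b2⟩ := hT y hy
  have hint : u ⬝ᵥ (A *ᵥ fun i => (k i : ℝ)) = ((m 0 * k 0 + m 1 * k 1 : ℤ) : ℝ) := by
    rw [Matrix.dotProduct_mulVec, ← Matrix.mulVec_transpose, hAu]
    simp [dotProduct, Fin.sum_univ_two, hmr]
  rw [dotProduct_add] at hc
  simp only at hc
  rw [hint] at hc
  have g1 : (0:ℝ) < ((m 0 * k 0 + m 1 * k 1 : ℤ) : ℝ) := by linarith
  have g2 : ((m 0 * k 0 + m 1 * k 1 : ℤ) : ℝ) < 1 := by linarith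
  have g3 : 0 < m 0 * k 0 + m 1 * k 1 := by exact_mod_cast g1
  have g4 : m 0 * k 0 + m 1 * k 1 < 1 := by exact_mod_cast g2
  omega

lemma latticeOf_one : latticeOf (1 : Matrix (Fin 2) (Fin 2) ℝ) = intLattice 2 := by
  simp [latticeOf, intLattice]

lemma d21_aux : dTrans triT = 3 / 8 ∧ NonSeparable (intLattice 2) triT ∧ (1 : ℝ) = starCritDet triT := by
  refine ⟨?_, int_nonsep, ?_⟩
  · apply IsLeast.csInf_eq
    constructor
    · refine ⟨1, by simp, by rw [latticeOf_one]; exact int_nonsep, ?_⟩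
      rw [volume_triT, ENNReal.toReal_ofReal (by norm_num)]; simp
    · rintro d ⟨A, hA, hns, rfl⟩
      rw [volume_triT, ENNReal.toReal_ofReal (by norm_num), le_div_iff₀ (abs_pos.mpr hA)]
      linarith [det_le_one A hA hns]
  · symm
    apply IsGreatest.csSup_eq
    constructor
    · exact ⟨1, by simp, by rw [latticeOf_one]; exact int_nonsep, by simp⟩
    · rintro d ⟨A, hA, hns, rfl⟩
      exact det_le_one A hA hns

/-- For the triangle `T = conv{(0,0),(1,1/2),(1/2,1)}`: `d_{2,1}(T) = 3/8` and
`ℤ²` is a *critical lattice for `T` (noting `d(ℤ²) = 1`). -/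
theorem d21_triangle :
    dTrans (convexHull ℝ ({![0, 0], ![1, 1/2], ![1/2, 1]} : Set (Fin 2 → ℝ))) = 3 / 8 ∧
    NonSeparable (intLattice 2)
      (convexHull ℝ ({![0, 0], ![1, 1/2], ![1/2, 1]} : Set (Fin 2 → ℝ))) ∧
    (1 : ℝ) = starCritDet (convexHull ℝ ({![0, 0], ![1, 1/2], ![1/2, 1]} : Set (Fin 2 → ℝ))) := by
  exact d21_aux
end
end

section
/- For the closed unit ball B in ℝ³, d_{3,2}(B) = π/(6√2). -/
open MeasureTheory Set Matrix Pointwise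

noncomputable section

theorem ineq_pos {a b c F G H : ℝ} (ha : 0 < a) (hab : a ≤ b) (hbc : b ≤ c)
    (hF : 0 ≤ F) (hG : 0 ≤ G) (hH : 0 ≤ H) (hFb : 2 * F ≤ b) (hGa : 2 * G ≤ a) (hHa : 2 * H ≤ a) :
    a * b * c / 2 ≤ a * b * c + 2 * F * G * H - a * F ^ 2 - b * G ^ 2 - c * H ^ 2 := by
  have h1 : F ^ 2 ≤ F * b / 2 := by nlinarith
  have h2 : c * H ^ 2 ≤ c * (H * a / 2) := by
    apply mul_le_mul_of_nonneg_left _ (by linarith); nlinarith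
  have h3 : b * G ^ 2 ≤ b * (G * a / 2) := by
    apply mul_le_mul_of_nonneg_left _ (by linarith); nlinarith
  have h4 : a * F ^ 2 ≤ a * (F * b / 2) := mul_le_mul_of_nonneg_left h1 ha.le
  have h5 : 0 ≤ (b - 2 * F) * (a - 2 * H) := mul_nonneg (by linarith) (by linarith)
  have h6 : 0 ≤ (b - a) * (b - 2 * F) := mul_nonneg (by linarith) (by linarith)
  have h7 : 0 ≤ (c - b) * (a - 2 * H) := mul_nonneg (by linarith) (by linarith)
  have h8 : 0 ≤ (c - b) * b := mul_nonneg (by linarith) (by linarith)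
  have h9 : 0 ≤ (b - a) * c := mul_nonneg (by linarith) (by linarith)
  have h10 : 0 ≤ b * c + 2 * F * H - b * F - c * H - a * b / 2 := by nlinarith
  have h11 : 4 * (F * H) ≤ b * a := by
    have := mul_le_mul hFb hHa (by linarith) (by linarith)
    linarith
  have h12 : 0 ≤ (b * a - 4 * (F * H)) * (a - 2 * G) := mul_nonneg (by linarith) (by linarith)
  have h13 := mul_nonneg ha.le h10
  nlinarith

theorem ineq_neg {a b c F G H : ℝ} (ha : 0 < a) (hab : a ≤ b) (hbc : b ≤ c)
    (hF : 0 ≤ F) (hG : 0 ≤ G) (hH : 0 ≤ H) (hFb : 2 * F ≤ b) (hGa : 2 * G ≤ a) (hHa : 2 * H ≤ a)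
    (hs : 2 * (F + G + H) ≤ a + b) :
    a * b * c / 2 ≤ a * b * c - 2 * F * G * H - a * F ^ 2 - b * G ^ 2 - c * H ^ 2 := by
  -- the expression is decreasing in `F`
  by_cases hGH : 2 * (G + H) ≤ a
  · have h1 : a * F ^ 2 ≤ a * (b / 2) ^ 2 := by
      apply mul_le_mul_of_nonneg_left _ ha.le
      exact pow_le_pow_left₀ hF (by linarith) 2
    have h2 : 2 * F * G * H ≤ b * G * H := by gcongr
    have h3 : b * G * (G + H) ≤ b * G * (a / 2) := by
      apply mul_le_mul_of_nonneg_left (by linarith)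
      exact mul_nonneg (by linarith) hG
    have h4 : c * H * H ≤ c * H * (a / 2) := by
      apply mul_le_mul_of_nonneg_left (by linarith)
      exact mul_nonneg (by linarith) hH
    have h5 : b * (G * a) ≤ c * (G * a) := by gcongr
    have h6 : c * a * (G + H) ≤ c * a * (a / 2) := by
      apply mul_le_mul_of_nonneg_left (by linarith)
      exact mul_nonneg (by linarith) ha.le
    have h7 : c * a * a ≤ c * a * b := by
      apply mul_le_mul_of_nonneg_left hab
      exact mul_nonneg (by linarith) ha.le
    have h8 : a * b * b ≤ a * b * c := by
      apply mul_le_mul_of_nonneg_left hbc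
      exact mul_nonneg ha.le (by linarith)
    nlinarith
  · push Not at hGH
    obtain ⟨s, hs'⟩ : ∃ s, G = a / 2 - s := ⟨a / 2 - G, by ring⟩
    obtain ⟨t, ht'⟩ : ∃ t, H = a / 2 - t := ⟨a / 2 - H, by ring⟩
    obtain ⟨r, hr'⟩ : ∃ r, a = 2 * (r + s + t) := ⟨a / 2 - s - t, by ring⟩
    obtain ⟨d, hd⟩ : ∃ d, b = a + d := ⟨b - a, by ring⟩
    obtain ⟨e, he⟩ : ∃ e, c = b + e := ⟨c - b, by ring⟩
    have hr0 : 0 ≤ r := by linarith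
    have hs0 : 0 ≤ s := by linarith
    have ht0 : 0 ≤ t := by linarith
    have hd0 : 0 ≤ d := by linarith
    have he0 : 0 ≤ e := by linarith
    have hF1 : F ≤ b / 2 - r := by linarith
    have h1 : a * F ^ 2 ≤ a * (b / 2 - r) ^ 2 := by
      apply mul_le_mul_of_nonneg_left _ ha.le
      exact pow_le_pow_left₀ hF (by linarith) 2
    have h2 : 2 * F * G * H ≤ 2 * (b / 2 - r) * G * H := by gcongr
    suffices h : 0 ≤ a * b * c / 2 - 2 * (b / 2 - r) * G * H - a * (b / 2 - r) ^ 2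
        - b * G ^ 2 - c * H ^ 2 by linarith
    subst hs' ht' he hd hr'
    ring_nf
    positivity

theorem det_le {a b c f g h : ℝ} (ha : 0 < a) (hab : a ≤ b) (hbc : b ≤ c)
    (f1 : 2 * f ≤ b) (f2 : -(2 * f) ≤ b) (g1 : 2 * g ≤ a) (g2 : -(2 * g) ≤ a)
    (h1 : 2 * h ≤ a) (h2 : -(2 * h) ≤ a)
    (s1 : 0 ≤ a + b + 2 * (f + g + h)) (s2 : 0 ≤ a + b + 2 * (h - f - g))
    (s3 : 0 ≤ a + b + 2 * (f - g - h)) (s4 : 0 ≤ a + b + 2 * (g - f - h)) :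
    a * b * c / 2 ≤ a * b * c + 2 * f * g * h - a * f ^ 2 - b * g ^ 2 - c * h ^ 2 := by
  rcases le_total 0 f with hf | hf <;> rcases le_total 0 g with hg | hg <;>
    rcases le_total 0 h with hh | hh
  · have := ineq_pos ha hab hbc hf hg hh (by linarith) (by linarith) (by linarith); linarith
  · have := @ineq_neg a b c f g (-h) ha hab hbc (by linarith) (by linarith) (by linarith)
      (by linarith) (by linarith) (by linarith) (by linarith); nlinarith
  · have := @ineq_neg a b c f (-g) h ha hab hbc (by linarith) (by linarith) (by linarith)
      (by linarith) (by linarith) (by linarith) (by linarith); nlinarith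
  · have := @ineq_pos a b c f (-g) (-h) ha hab hbc (by linarith) (by linarith) (by linarith)
      (by linarith) (by linarith) (by linarith); nlinarith
  · have := @ineq_neg a b c (-f) g h ha hab hbc (by linarith) (by linarith) (by linarith)
      (by linarith) (by linarith) (by linarith) (by linarith); nlinarith
  · have := @ineq_pos a b c (-f) g (-h) ha hab hbc (by linarith) (by linarith) (by linarith)
      (by linarith) (by linarith) (by linarith); nlinarith
  · have := @ineq_pos a b c (-f) (-g) h ha hab hbc (by linarith) (by linarith) (by linarith)
      (by linarith) (by linarith) (by linarith); nlinarith
  · have := @ineq_neg a b c (-f) (-g) (-h) ha hab hbc (by linarith) (by linarith) (by linarith)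
      (by linarith) (by linarith) (by linarith) (by linarith); nlinarith

theorem det_le' {a b c f g h : ℝ} (ha : 0 < a) (hb : 0 < b) (hc : 0 < c)
    (f1 : 2 * |f| ≤ b) (f2 : 2 * |f| ≤ c) (g1 : 2 * |g| ≤ a) (g2 : 2 * |g| ≤ c)
    (h1 : 2 * |h| ≤ a) (h2 : 2 * |h| ≤ b)
    (s : ∀ x, x = f + g + h ∨ x = h - f - g ∨ x = f - g - h ∨ x = g - f - h →
      0 ≤ a + b + 2 * x ∧ 0 ≤ a + c + 2 * x ∧ 0 ≤ b + c + 2 * x) :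
    a * b * c / 2 ≤ a * b * c + 2 * f * g * h - a * f ^ 2 - b * g ^ 2 - c * h ^ 2 := by
  have s1 := s (f + g + h) (by simp)
  have s2 := s (h - f - g) (by simp)
  have s3 := s (f - g - h) (by simp)
  have s4 := s (g - f - h) (by simp)
  have := le_abs_self f
  have := neg_abs_le f
  have := le_abs_self g
  have := neg_abs_le g
  have := le_abs_self h
  have := neg_abs_le h
  rcases le_total a b with hab | hab <;> rcases le_total b c with hbc | hbc <;>
    rcases le_total a c with hac | hac
  · have := @det_le a b c f g h ha hab hbc; grind
  · have := @det_le a b c f g h ha hab hbc; grind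
  · have := @det_le a c b f h g ha hac hbc; grind
  · have := @det_le c a b h f g hc hac hab; grind
  · have := @det_le b a c g f h hb hab hac; grind
  · have := @det_le b c a g h f hb hbc hac; grind
  · have := @det_le c b a h g f hc hbc hab; grind
  · have := @det_le c b a h g f hc hbc hab; grind

theorem vol_ball : (volume {x : Fin 3 → ℝ | x ⬝ᵥ x ≤ 1}).toReal = Real.pi * 4 / 3 := by
  have h : {x : Fin 3 → ℝ | x ⬝ᵥ x ≤ 1} =
      (WithLp.toLp 2) ⁻¹' (Metric.closedBall (0 : EuclideanSpace ℝ (Fin 3)) 1) := by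
    ext x
    simp [EuclideanSpace.norm_eq, dotProduct, Fin.sum_univ_three, pow_two]
  rw [h, (PiLp.volume_preserving_toLp (Fin 3)).measure_preimage
    measurableSet_closedBall.nullMeasurableSet, EuclideanSpace.volume_closedBall_fin_three]
  simp
  positivity

/-- scaled body-centred cubic lattice -/
def bcc : Matrix (Fin 3) (Fin 3) ℝ :=
  !![-Real.sqrt 2, Real.sqrt 2, Real.sqrt 2; Real.sqrt 2, -Real.sqrt 2, Real.sqrt 2;
     Real.sqrt 2, Real.sqrt 2, -Real.sqrt 2]

theorem bcc_det : bcc.det = 8 * Real.sqrt 2 := by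
  have h : Real.sqrt 2 ^ 2 = 2 := Real.sq_sqrt (by norm_num)
  rw [bcc, Matrix.det_fin_three]
  simp
  ring_nf

theorem exists_step (u : Fin 3 → ℝ) (hu : u ≠ 0) :
    ∃ m : Fin 3 → ℤ, u ⬝ᵥ (bcc.mulVec fun i => (m i : ℝ)) ≠ 0 ∧
      (u ⬝ᵥ (bcc.mulVec fun i => (m i : ℝ))) ^ 2 ≤ 4 * (u ⬝ᵥ u) := by
  have h : Real.sqrt 2 ^ 2 = 2 := Real.sq_sqrt (by norm_num)
  have h0 : Real.sqrt 2 ≠ 0 := by positivity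
  by_contra! hc
  have e0 := hc ![1, 0, 0]
  have e1 := hc ![0, 1, 0]
  have e2 := hc ![0, 0, 1]
  have e3 := hc ![1, 1, 1]
  simp only [bcc, dotProduct, Matrix.mulVec, Fin.sum_univ_three] at e0 e1 e2 e3
  simp at e0 e1 e2 e3
  obtain ⟨a, ha⟩ : ∃ a, a = u 0 := ⟨_, rfl⟩
  obtain ⟨b, hb⟩ : ∃ b, b = u 1 := ⟨_, rfl⟩
  obtain ⟨c, hc⟩ : ∃ c, c = u 2 := ⟨_, rfl⟩
  rw [← ha, ← hb, ← hc] at e0 e1 e2 e3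
  have key : ∀ s : ℝ, (¬ (Real.sqrt 2 * s = 0) → 4 * (a * a + b * b + c * c) < (Real.sqrt 2 * s) ^ 2) →
      s = 0 ∨ 2 * (a * a + b * b + c * c) < s ^ 2 := by
    intro s hs
    by_cases h1 : s = 0
    · exact Or.inl h1
    · right
      have := hs (by simp [h0, h1])
      rw [mul_pow, h] at this
      linarith
  have k0 := key (-a + b + c) (by
    intro hne
    have := e0 (by intro hh; apply hne; rw [← hh]; ring)
    refine this.trans_eq ?_
    ring)
  have k1 := key (a - b + c) (by
    intro hne
    have := e1 (by intro hh; apply hne; rw [← hh]; ring)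
    refine this.trans_eq ?_
    ring)
  have k2 := key (a + b - c) (by
    intro hne
    have := e2 (by intro hh; apply hne; rw [← hh]; ring)
    refine this.trans_eq ?_
    ring)
  have k3 := key (a + b + c) (by
    intro hne
    have := e3 (by intro hh; apply hne; rw [← hh]; ring)
    refine this.trans_eq ?_
    ring)
  have : a = 0 ∧ b = 0 ∧ c = 0 := by
    have p0 := sq_nonneg (-a + b + c)
    have p1 := sq_nonneg (a - b + c)
    have p2 := sq_nonneg (a + b - c)
    have p3 := sq_nonneg (a + b + c)
    rcases k0 with k0 | k0 <;> rcases k1 with k1 | k1 <;> rcases k2 with k2 | k2 <;>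
      rcases k3 with k3 | k3 <;>
    first
    | (exfalso; nlinarith)
    | (refine ⟨?_, ?_, ?_⟩ <;> linarith)
  apply hu
  ext i
  fin_cases i <;> simp <;> grind

theorem bcc_nonsep : NonSeparable (latticeOf bcc) {x : Fin 3 → ℝ | x ⬝ᵥ x ≤ 1} := by
  intro u hu c
  obtain ⟨m, hm0, hm⟩ := exists_step u hu
  set t := u ⬝ᵥ (bcc.mulVec fun i => (m i : ℝ)) with ht
  have hpos : 0 < u ⬝ᵥ u := by
    have := dotProduct_self_star_pos_iff (v := u)
    simpa using this.2 hu
  refine ⟨bcc.mulVec fun i => ((round (c / t) * m i : ℤ) : ℝ), ⟨fun i => round (c / t) * m i, rfl⟩,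
    ((c - round (c / t) * t) / (u ⬝ᵥ u)) • u, ?_, ?_⟩
  · have h1 : |c / t - round (c / t)| ≤ 1 / 2 := abs_sub_round _
    have h2 : (c / t - round (c / t)) ^ 2 ≤ (1 / 2) ^ 2 := sq_le_sq' (by linarith [(abs_le.1 h1).1]) (abs_le.1 h1).2
    have h3 : c - round (c / t) * t = (c / t - round (c / t)) * t := by field_simp
    simp only [mem_ofPred_eq, smul_dotProduct, dotProduct_smul, smul_eq_mul]
    rw [h3]
    have : (c / t - round (c / t)) * t / (u ⬝ᵥ u) * ((c / t - round (c / t)) * t / (u ⬝ᵥ u) * (u ⬝ᵥ u))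
       = (c / t - round (c / t)) ^ 2 * t ^ 2 / (u ⬝ᵥ u) := by field_simp
    rw [this, div_le_one hpos]
    have := mul_le_mul h2 hm (sq_nonneg _) (by norm_num)
    linarith
  · have : (fun i => ((round (c / t) * m i : ℤ) : ℝ)) = (round (c / t) : ℝ) • fun i => (m i : ℝ) := by
      ext i; simp
    rw [this, Matrix.mulVec_smul, dotProduct_add, dotProduct_smul, dotProduct_smul, ← ht]
    simp only [smul_eq_mul]
    field_simp
    ring

theorem dual_bound (A : Matrix (Fin 3) (Fin 3) ℝ) (hA : A.det ≠ 0)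
    (hns : NonSeparable (latticeOf A) {x : Fin 3 → ℝ | x ⬝ᵥ x ≤ 1}) (m : Fin 3 → ℤ) (hm : m ≠ 0) :
    1 / 4 ≤ ((A⁻¹)ᵀ.mulVec fun i => (m i : ℝ)) ⬝ᵥ ((A⁻¹)ᵀ.mulVec fun i => (m i : ℝ)) := by
  set u := (A⁻¹)ᵀ.mulVec fun i => (m i : ℝ) with hu
  have hA' : IsUnit A.det := isUnit_iff_ne_zero.2 hA
  have hdot : ∀ k : Fin 3 → ℝ, u ⬝ᵥ A.mulVec k = (fun i => (m i : ℝ)) ⬝ᵥ k := by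
    intro k
    rw [hu, Matrix.mulVec_transpose, ← Matrix.dotProduct_mulVec, Matrix.mulVec_mulVec,
      Matrix.nonsing_inv_mul _ hA', Matrix.one_mulVec]
  have hu0 : u ≠ 0 := by
    intro h0
    apply hm
    ext i
    have := hdot (Pi.single i 1)
    simp [h0] at this
    simpa using this.symm
  obtain ⟨x, ⟨k, rfl⟩, y, hy, hxy⟩ := hns u hu0 (1 / 2)
  simp only [mem_ofPred_eq] at hy
  simp only [dotProduct_add, hdot] at hxy
  have hint : ((fun i => (m i : ℝ)) ⬝ᵥ fun i => (k i : ℝ)) = ((m ⬝ᵥ k : ℤ) : ℝ) := by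
    simp [dotProduct]
  rw [hint] at hxy
  have h1 : 1 / 4 ≤ (u ⬝ᵥ y) ^ 2 := by
    rw [show u ⬝ᵥ y = 1 / 2 - ((m ⬝ᵥ k : ℤ) : ℝ) by linarith]
    have : (0 : ℝ) ≤ ((m ⬝ᵥ k) * ((m ⬝ᵥ k) - 1) : ℤ) := by
      norm_cast
      rcases le_or_gt (m ⬝ᵥ k) 0 with h | h <;> nlinarith
    push_cast at this
    nlinarith
  have h2 : (u ⬝ᵥ y) ^ 2 ≤ (u ⬝ᵥ u) * (y ⬝ᵥ y) := by
    simp only [dotProduct, Fin.sum_univ_three]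
    nlinarith [sq_nonneg (u 0 * y 1 - u 1 * y 0), sq_nonneg (u 0 * y 2 - u 2 * y 0),
      sq_nonneg (u 1 * y 2 - u 2 * y 1)]
  have h3 : 0 ≤ u ⬝ᵥ u := by
    simp only [dotProduct, Fin.sum_univ_three]
    nlinarith [sq_nonneg (u 0), sq_nonneg (u 1), sq_nonneg (u 2)]
  nlinarith

def energy (B : Matrix (Fin 3) (Fin 3) ℝ) (M : Matrix (Fin 3) (Fin 3) ℤ) : ℝ :=
  ∑ i, ∑ j, ((B * M.map (Int.cast : ℤ → ℝ)) i j) ^ 2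

theorem energy_finite (B : Matrix (Fin 3) (Fin 3) ℝ) (hB : B.det ≠ 0) (R : ℝ) :
    {M : Matrix (Fin 3) (Fin 3) ℤ | energy B M ≤ R}.Finite := by
  obtain ⟨N, hN⟩ := exists_nat_ge ((∑ i, ∑ k, |B⁻¹ i k|) * (R + 1))
  have hfin : {M : Fin 3 → Fin 3 → ℤ | ∀ i, M i ∈ {v : Fin 3 → ℤ | ∀ j, v j ∈ Set.Icc (-(N : ℤ)) N}}.Finite :=
    Set.Finite.pi' fun i => Set.Finite.pi' fun j => Set.finite_Icc _ _
  refine hfin.subset ?_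
  intro (M : Matrix (Fin 3) (Fin 3) ℤ) hM i j
  have hM : energy B M ≤ R := hM
  set P := B * M.map (Int.cast : ℤ → ℝ) with hP
  have hMP : M.map (Int.cast : ℤ → ℝ) = B⁻¹ * P := by
    rw [hP, ← Matrix.mul_assoc, Matrix.nonsing_inv_mul _ (isUnit_iff_ne_zero.2 hB), Matrix.one_mul]
  have hPb : ∀ k, |P k j| ≤ R + 1 := by
    intro k
    have h1 : (P k j) ^ 2 ≤ R := by
      refine le_trans ?_ hM
      refine le_trans ?_ (Finset.single_le_sum (f := fun i => ∑ j, (P i j) ^ 2)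
        (fun i _ => Finset.sum_nonneg fun j _ => sq_nonneg _) (Finset.mem_univ k))
      exact Finset.single_le_sum (f := fun j => (P k j) ^ 2) (fun j _ => sq_nonneg _)
        (Finset.mem_univ j)
    rw [← sq_abs] at h1
    nlinarith [sq_nonneg (|P k j| - 1), abs_nonneg (P k j)]
  have hR : 0 ≤ R + 1 := (abs_nonneg _).trans (hPb 0)
  have hb : |(M i j : ℝ)| ≤ N := by
    have : (M i j : ℝ) = ∑ k, B⁻¹ i k * P k j := by
      have := congrFun (congrFun hMP i) j
      rwa [Matrix.map_apply, Matrix.mul_apply] at this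
    rw [this]
    calc |∑ k, B⁻¹ i k * P k j| ≤ ∑ k, |B⁻¹ i k * P k j| := Finset.abs_sum_le_sum_abs _ _
      _ ≤ ∑ k, |B⁻¹ i k| * (R + 1) := by
        refine Finset.sum_le_sum fun k _ => ?_
        rw [abs_mul]
        exact mul_le_mul_of_nonneg_left (hPb k) (abs_nonneg _)
      _ = (∑ k, |B⁻¹ i k|) * (R + 1) := by rw [Finset.sum_mul]
      _ ≤ (∑ i, ∑ k, |B⁻¹ i k|) * (R + 1) := by
        refine mul_le_mul_of_nonneg_right ?_ hR
        exact Finset.single_le_sum (f := fun i => ∑ k, |B⁻¹ i k|)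
          (fun i _ => Finset.sum_nonneg fun j _ => abs_nonneg _) (Finset.mem_univ i)
      _ ≤ N := hN
  have h := abs_le.1 hb
  constructor
  · exact_mod_cast h.1
  · exact_mod_cast h.2

theorem exists_min_energy (B : Matrix (Fin 3) (Fin 3) ℝ) (hB : B.det ≠ 0) :
    ∃ M : Matrix (Fin 3) (Fin 3) ℤ, M.det = 1 ∧
      ∀ M' : Matrix (Fin 3) (Fin 3) ℤ, M'.det = 1 → energy B M ≤ energy B M' := by
  have hfin : {M : Matrix (Fin 3) (Fin 3) ℤ | M.det = 1 ∧ energy B M ≤ energy B 1}.Finite :=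
    (energy_finite B hB (energy B 1)).subset fun M hM => hM.2
  obtain ⟨M, hM, hmin⟩ := Set.exists_min_image _ (energy B) hfin ⟨1, by simp, le_rfl⟩
  refine ⟨M, hM.1, fun M' hM' => ?_⟩
  rcases le_total (energy B M') (energy B 1) with h | h
  · exact hmin M' ⟨hM', h⟩
  · exact hM.2.trans h

theorem gauss (B : Matrix (Fin 3) (Fin 3) ℝ) (hB : B.det ≠ 0)
    (hmin : ∀ m : Fin 3 → ℤ, m ≠ 0 →
      1 / 4 ≤ (B.mulVec fun i => (m i : ℝ)) ⬝ᵥ (B.mulVec fun i => (m i : ℝ))) :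
    1 / 128 ≤ B.det ^ 2 := by
  obtain ⟨M, hM, hle⟩ := exists_min_energy B hB
  set P := B * M.map (Int.cast : ℤ → ℝ) with hP
  have hdet : P.det = B.det := by
    have : (M.map (Int.cast : ℤ → ℝ)).det = ((M.det : ℤ) : ℝ) := (Int.cast_det M).symm
    rw [hP, Matrix.det_mul, this, hM]; simp
  have hE : ∀ E : Matrix (Fin 3) (Fin 3) ℤ, E.det = 1 →
      ∑ i, ∑ j, (P i j) ^ 2 ≤ ∑ i, ∑ j, ((P * E.map (Int.cast : ℤ → ℝ)) i j) ^ 2 := by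
    intro E hEd
    have h := hle (M * E) (by rw [Matrix.det_mul, hM, hEd]; rfl)
    have h2 : (M * E).map (Int.cast : ℤ → ℝ) = M.map (Int.cast : ℤ → ℝ) * E.map (Int.cast : ℤ → ℝ) :=
      Matrix.map_mul_intCast M E
    rw [energy, energy, h2, ← Matrix.mul_assoc, ← hP] at h
    exact h
  have hcol : ∀ j, 1 / 4 ≤ ∑ i, (P i j) ^ 2 := by
    intro j
    have h0 : (fun i => M i j) ≠ 0 := by
      intro h0
      have : M.det = 0 := Matrix.det_eq_zero_of_column_eq_zero j (fun i => congrFun h0 i)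
      omega
    have := hmin _ h0
    refine this.trans_eq ?_
    simp only [dotProduct, pow_two]
    rfl
  have e1 := fun p : ℤ => hE !![1, p, 0; 0, 1, 0; 0, 0, 1] (by simp [Matrix.det_fin_three])
  have e2 := fun p : ℤ => hE !![1, 0, 0; p, 1, 0; 0, 0, 1] (by simp [Matrix.det_fin_three])
  have e3 := fun p : ℤ => hE !![1, 0, p; 0, 1, 0; 0, 0, 1] (by simp [Matrix.det_fin_three])
  have e4 := fun p : ℤ => hE !![1, 0, 0; 0, 1, 0; p, 0, 1] (by simp [Matrix.det_fin_three])
  have e5 := fun p : ℤ => hE !![1, 0, 0; 0, 1, p; 0, 0, 1] (by simp [Matrix.det_fin_three])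
  have e6 := fun p : ℤ => hE !![1, 0, 0; 0, 1, 0; 0, p, 1] (by simp [Matrix.det_fin_three])
  have t1 := fun p q : ℤ => hE !![1, 0, 0; p, 1, 0; q, 0, 1] (by simp [Matrix.det_fin_three])
  have t2 := fun p q : ℤ => hE !![1, p, 0; 0, 1, 0; 0, q, 1] (by simp [Matrix.det_fin_three])
  have t3 := fun p q : ℤ => hE !![1, 0, p; 0, 1, q; 0, 0, 1] (by simp [Matrix.det_fin_three])
  have c0 := hcol 0
  have c1 := hcol 1
  have c2 := hcol 2
  clear hE hcol hle
  rw [← hdet, Matrix.det_fin_three]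
  clear_value P
  simp [Matrix.mul_apply, Fin.sum_univ_three] at e1 e2 e3 e4 e5 e6 t1 t2 t3 c0 c1 c2
  generalize P 0 0 = x0 at *
  generalize P 1 0 = x1 at *
  generalize P 2 0 = x2 at *
  generalize P 0 1 = y0 at *
  generalize P 1 1 = y1 at *
  generalize P 2 1 = y2 at *
  generalize P 0 2 = z0 at *
  generalize P 1 2 = z1 at *
  generalize P 2 2 = z2 at *
  obtain ⟨a, ha⟩ : ∃ a, a = x0 ^ 2 + x1 ^ 2 + x2 ^ 2 := ⟨_, rfl⟩
  obtain ⟨b, hb⟩ : ∃ b, b = y0 ^ 2 + y1 ^ 2 + y2 ^ 2 := ⟨_, rfl⟩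
  obtain ⟨c, hc⟩ : ∃ c, c = z0 ^ 2 + z1 ^ 2 + z2 ^ 2 := ⟨_, rfl⟩
  obtain ⟨f, hf⟩ : ∃ f, f = y0 * z0 + y1 * z1 + y2 * z2 := ⟨_, rfl⟩
  obtain ⟨g, hg⟩ : ∃ g, g = x0 * z0 + x1 * z1 + x2 * z2 := ⟨_, rfl⟩
  obtain ⟨h, hh⟩ : ∃ h, h = x0 * y0 + x1 * y1 + x2 * y2 := ⟨_, rfl⟩
  have e1' : ∀ p : ℤ, 0 ≤ 2 * p * h + p ^ 2 * a := fun p => by rw [ha, hh]; linarith [e1 p]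
  have e2' : ∀ p : ℤ, 0 ≤ 2 * p * h + p ^ 2 * b := fun p => by rw [hb, hh]; linarith [e2 p]
  have e3' : ∀ p : ℤ, 0 ≤ 2 * p * g + p ^ 2 * a := fun p => by rw [ha, hg]; linarith [e3 p]
  have e4' : ∀ p : ℤ, 0 ≤ 2 * p * g + p ^ 2 * c := fun p => by rw [hc, hg]; linarith [e4 p]
  have e5' : ∀ p : ℤ, 0 ≤ 2 * p * f + p ^ 2 * b := fun p => by rw [hb, hf]; linarith [e5 p]
  have e6' : ∀ p : ℤ, 0 ≤ 2 * p * f + p ^ 2 * c := fun p => by rw [hc, hf]; linarith [e6 p]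
  have t1' : ∀ p q : ℤ, 0 ≤ p ^ 2 * b + q ^ 2 * c + 2 * (p * h + q * g + p * q * f) :=
    fun p q => by rw [hb, hc, hf, hg, hh]; linarith [t1 p q]
  have t2' : ∀ p q : ℤ, 0 ≤ p ^ 2 * a + q ^ 2 * c + 2 * (p * h + q * f + p * q * g) :=
    fun p q => by rw [ha, hc, hf, hg, hh]; linarith [t2 p q]
  have t3' : ∀ p q : ℤ, 0 ≤ p ^ 2 * a + q ^ 2 * b + 2 * (p * g + q * f + p * q * h) :=
    fun p q => by rw [ha, hb, hf, hg, hh]; linarith [t3 p q]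
  have hab : ∀ r s : ℝ, (∀ p : ℤ, 0 ≤ 2 * p * r + p ^ 2 * s) → 2 * |r| ≤ s := by
    intro r s hrs
    have h1 := hrs 1
    have h2 := hrs (-1)
    push_cast at h1 h2
    rcases abs_cases r with h3 | h3 <;> linarith
  have a4 : 1 / 4 ≤ a := by rw [ha]; norm_num; linarith
  have b4 : 1 / 4 ≤ b := by rw [hb]; norm_num; linarith
  have c4 : 1 / 4 ≤ c := by rw [hc]; norm_num; linarith
  have key := @det_le' a b c f g h (by linarith) (by linarith) (by linarith)
    (hab _ _ e5') (hab _ _ e6') (hab _ _ e3') (hab _ _ e4') (hab _ _ e1') (hab _ _ e2') (by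
      have q1 := t1' 1 1
      have q2 := t1' 1 (-1)
      have q3 := t1' (-1) 1
      have q4 := t1' (-1) (-1)
      have r1 := t2' 1 1
      have r2 := t2' 1 (-1)
      have r3 := t2' (-1) 1
      have r4 := t2' (-1) (-1)
      have s1 := t3' 1 1
      have s2 := t3' 1 (-1)
      have s3 := t3' (-1) 1
      have s4 := t3' (-1) (-1)
      push_cast at q1 q2 q3 q4 r1 r2 r3 r4 s1 s2 s3 s4
      rintro x (rfl | rfl | rfl | rfl) <;> refine ⟨?_, ?_, ?_⟩ <;> linarith)
  have habc : 1 / 64 ≤ a * b * c := by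
    have h1 : 1 / 4 * (1 / 4) ≤ a * b := mul_le_mul a4 b4 (by norm_num) (by linarith)
    have h2 := mul_le_mul h1 c4 (by norm_num) (by nlinarith)
    linarith
  have hgram : a * b * c + 2 * f * g * h - a * f ^ 2 - b * g ^ 2 - c * h ^ 2 =
      (x0 * y1 * z2 - x0 * z1 * y2 - y0 * x1 * z2 + y0 * z1 * x2 + z0 * x1 * y2 - z0 * y1 * x2) ^ 2 := by
    rw [ha, hb, hc, hf, hg, hh]; ring
  rw [← hgram]
  linarith

/-- For the closed unit ball `B ⊆ ℝ³`: `d_{3,2}(B) = π/(6√2)`. -/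
theorem d32_unit_ball :
    dTrans {x : Fin 3 → ℝ | x ⬝ᵥ x ≤ 1} = Real.pi / (6 * Real.sqrt 2) := by
  have h2 : Real.sqrt 2 ^ 2 = 2 := Real.sq_sqrt (by norm_num)
  have hs : 0 < Real.sqrt 2 := by positivity
  refine IsLeast.csInf_eq ⟨⟨bcc, ?_, bcc_nonsep, ?_⟩, ?_⟩
  · rw [bcc_det]; positivity
  · rw [vol_ball, bcc_det, abs_of_pos (by positivity)]
    field_simp
    norm_num
  · rintro d ⟨A, hA, hns, rfl⟩
    rw [vol_ball]
    have hdet : ((A⁻¹)ᵀ).det = A.det⁻¹ := by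
      rw [Matrix.det_transpose, Matrix.det_nonsing_inv, Ring.inverse_eq_inv']
    have hg := gauss (A⁻¹)ᵀ (by rw [hdet]; exact inv_ne_zero hA) (dual_bound A hA hns)
    rw [hdet, inv_pow] at hg
    have hpos : 0 < A.det ^ 2 := by positivity
    have h1 : A.det ^ 2 ≤ 128 := by
      rw [one_div] at hg
      exact (inv_le_inv₀ (by norm_num) hpos).1 hg
    have h3 : |A.det| ≤ 8 * Real.sqrt 2 := by
      refine abs_le_of_sq_le_sq ?_ (by positivity)
      rw [mul_pow, h2]; linarith
    have h4 : 0 < |A.det| := abs_pos.2 hA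
    rw [div_le_div_iff₀ (by positivity) h4]
    nlinarith [Real.pi_pos]
end
end
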